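/- arXiv:0907.2051 — 2 statements merged into one kernel-verified Lean document; each statement's English description precedes it below -/
import Mathlib

section
/- There is an absolute constant c > 0 such that for every finite A ⊆ F_p with 2 ≤ |A| ≤ p^{1/2}, one has max{|A+A|, |AA|} ≥ c|A|^{13/12}. -/
open Finset Pointwise

section SubmodularPetridis

variable {G : Type*} [AddCommGroup G] [DecidableEq G]

/-- The Petridis lemma for a translation-invariant submodular function on finite sets. -/
theorem submodular_petridis (φ : Finset G → ℝ)
    (hsub : ∀ U V, φ (U ∪ V) + φ (U ∩ V) ≤ φ U + φ V) (htr : ∀ x U, φ ({x} + U) = φ U)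
    (h_empty : φ ∅ = 0) {κ : ℝ} {Z : Finset G} (hZ : φ Z ≤ κ * #Z)
    (hmin : ∀ Z' ⊆ Z, κ * #Z' ≤ φ Z') (C : Finset G) : φ (C + Z) ≤ κ * #(C + Z) := by
  induction C using Finset.induction_on with
  | empty => simp [h_empty]
  | insert x C _ ih =>
    have hinter : {x} + (Z ∩ ({-x} + (C + Z))) = (C + Z) ∩ ({x} + Z) := by
      rw [singleton_add_inter, ← add_assoc, singleton_add_singleton, add_neg_cancel,
        singleton_zero, zero_add, inter_comm]
    have hunion : insert x C + Z = (C + Z) ∪ ({x} + Z) := by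
      rw [insert_eq, union_add, union_comm]
    have h1 := hsub (C + Z) ({x} + Z)
    have h2 := hmin _ (inter_subset_left (s₁ := Z) (s₂ := {-x} + (C + Z)))
    have h3 : (#((C + Z) ∪ ({x} + Z)) : ℝ) + #((C + Z) ∩ ({x} + Z)) = #(C + Z) + #Z := by
      have := card_union_add_card_inter (C + Z) ({x} + Z)
      rw [card_singleton_add] at this
      exact_mod_cast this
    rw [← hinter, htr, htr] at h1
    rw [← hinter, card_singleton_add] at h3
    rw [hunion]
    have h4 := congrArg (κ * ·) h3
    simp only [mul_add] at h4
    linarith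

theorem card_union_add_add_card_inter_add_le (U V B : Finset G) :
    #((U ∪ V) + B) + #((U ∩ V) + B) ≤ #(U + B) + #(V + B) := by
  rw [union_add, ← card_union_add_card_inter (U + B) (V + B)]
  gcongr
  exact inter_add_subset

/-- Two sumset ratios can be controlled simultaneously on a suitable nonempty subset. -/
theorem exists_subset_card_add_add_le {Y B₁ B₂ : Finset G} (hY : Y.Nonempty) {α₁ α₂ : ℝ}
    (hα₁ : 0 < α₁) (hα₂ : 0 < α₂) (h₁ : (#(Y + B₁) : ℝ) ≤ α₁ * #Y)
    (h₂ : (#(Y + B₂) : ℝ) ≤ α₂ * #Y) :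
    ∃ Z ⊆ Y, Z.Nonempty ∧ ∀ C : Finset G, (#(C + Z + B₁) : ℝ) ≤ 2 * α₁ * #(C + Z) ∧
      (#(C + Z + B₂) : ℝ) ≤ 2 * α₂ * #(C + Z) := by
  set φ : Finset G → ℝ := fun U ↦ #(U + B₁) / α₁ + #(U + B₂) / α₂ with hφ
  obtain ⟨Z, hZ, hmin⟩ := exists_min_image (Y.powerset.erase ∅) (fun U ↦ φ U / #U)
    ⟨Y, by simp [hY.ne_empty]⟩
  simp only [mem_erase, mem_powerset] at hZ hmin
  have hZ' : Z.Nonempty := nonempty_iff_ne_empty.2 hZ.1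
  have hZpos : (0 : ℝ) < #Z := by exact_mod_cast hZ'.card_pos
  have hYpos : (0 : ℝ) < #Y := by exact_mod_cast hY.card_pos
  have hκ : φ Z / #Z ≤ 2 := by
    refine (hmin Y ⟨hY.ne_empty, Subset.rfl⟩).trans ?_
    rw [div_le_iff₀ hYpos]
    have e₁ : (#(Y + B₁) : ℝ) / α₁ ≤ #Y := by rw [div_le_iff₀ hα₁]; linarith
    have e₂ : (#(Y + B₂) : ℝ) / α₂ ≤ #Y := by rw [div_le_iff₀ hα₂]; linarith
    simp only [hφ]
    linarith
  refine ⟨Z, hZ.2, hZ', fun C ↦ ?_⟩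
  have key : φ (C + Z) ≤ φ Z / #Z * #(C + Z) := by
    refine submodular_petridis φ (fun U V ↦ ?_) (fun x U ↦ ?_) ?_ ?_ (fun Z' hZ'' ↦ ?_) C
    · have e₁ : (#((U ∪ V) + B₁) : ℝ) + #((U ∩ V) + B₁) ≤ #(U + B₁) + #(V + B₁) := by
        exact_mod_cast card_union_add_add_card_inter_add_le U V B₁
      have e₂ : (#((U ∪ V) + B₂) : ℝ) + #((U ∩ V) + B₂) ≤ #(U + B₂) + #(V + B₂) := by
        exact_mod_cast card_union_add_add_card_inter_add_le U V B₂
      have e₁' := div_le_div_of_nonneg_right e₁ hα₁.le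
      have e₂' := div_le_div_of_nonneg_right e₂ hα₂.le
      simp only [add_div] at e₁' e₂'
      simp only [hφ]
      linarith
    · simp [hφ, add_assoc]
    · simp [hφ]
    · rw [div_mul_cancel₀ _ hZpos.ne']
    · obtain rfl | hne := Z'.eq_empty_or_nonempty
      · simp [hφ]
      · rw [← le_div_iff₀ (by exact_mod_cast hne.card_pos)]
        exact hmin Z' ⟨hne.ne_empty, hZ''.trans hZ.2⟩
  have key' : φ (C + Z) ≤ 2 * #(C + Z) := key.trans (by gcongr)
  simp only [hφ] at key'
  have p₁ : (0 : ℝ) ≤ #(C + Z + B₁) / α₁ := by positivity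
  have p₂ : (0 : ℝ) ≤ #(C + Z + B₂) / α₂ := by positivity
  have e₁ : (#(C + Z + B₁) : ℝ) / α₁ ≤ 2 * #(C + Z) := by linarith
  have e₂ : (#(C + Z + B₂) : ℝ) / α₂ ≤ 2 * #(C + Z) := by linarith
  rw [div_le_iff₀ hα₁] at e₁
  rw [div_le_iff₀ hα₂] at e₂
  constructor <;> linarith

/-- If every large subset of `Y` has a nonempty subset whose sum with `D` is small, then a large
subset of `Y` has a small sum with `D`. -/
theorem exists_large_subset_card_add_le {Y D : Finset G} {β : ℝ}
    (h : ∀ Y' ⊆ Y, Y'.Nonempty → (#Y : ℝ) ≤ 2 * #Y' →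
      ∃ Z ⊆ Y', Z.Nonempty ∧ (#(Z + D) : ℝ) ≤ β * #Z) :
    ∃ Z ⊆ Y, (#Y : ℝ) ≤ 2 * #Z ∧ (#(Z + D) : ℝ) ≤ β * #Z := by
  obtain ⟨Z, hZ, hmax⟩ := exists_max_image {Z ∈ Y.powerset | (#(Z + D) : ℝ) ≤ β * #Z}
    (fun Z ↦ #Z) ⟨∅, by simp⟩
  simp only [mem_filter, mem_powerset] at hZ hmax
  refine ⟨Z, hZ.1, ?_, hZ.2⟩
  by_contra! hlt
  have hcard : (#(Y \ Z) : ℝ) + #Z = #Y := by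
    exact_mod_cast card_sdiff_add_card_eq_card hZ.1
  have hpos : (0 : ℝ) < #(Y \ Z) := by
    have : (0 : ℝ) ≤ #Z := by positivity
    linarith
  obtain ⟨W, hW, hWne, hWD⟩ := h (Y \ Z) sdiff_subset
    (card_pos.1 (by exact_mod_cast hpos)) (by linarith)
  have hdisj : Disjoint Z W := disjoint_sdiff.mono_right hW
  have hcardU : #(Z ∪ W) = #Z + #W := card_union_of_disjoint hdisj
  have := hmax (Z ∪ W) ⟨union_subset hZ.1 (hW.trans sdiff_subset), by
    rw [union_add, hcardU]
    have : (#((Z + D) ∪ (W + D)) : ℝ) ≤ #(Z + D) + #(W + D) := by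
      exact_mod_cast card_union_le _ _
    push_cast
    linarith [hZ.2]⟩
  have := hWne.card_pos
  omega

/-- A large subset of `Y` satisfies Plünnecke's inequality with two different summands. -/
theorem exists_large_subset_card_add_add_le {Y B₁ B₂ : Finset G} {α₁ α₂ : ℝ}
    (hα₁ : 0 < α₁) (hα₂ : 0 < α₂) (h₁ : (#(Y + B₁) : ℝ) ≤ α₁ * #Y)
    (h₂ : (#(Y + B₂) : ℝ) ≤ α₂ * #Y) :
    ∃ Z ⊆ Y, (#Y : ℝ) ≤ 2 * #Z ∧ (#(Z + (B₁ + B₂)) : ℝ) ≤ 16 * α₁ * α₂ * #Z := by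
  refine exists_large_subset_card_add_le fun Y' hY' hne hlarge ↦ ?_
  have e₁ : (#(Y' + B₁) : ℝ) ≤ 2 * α₁ * #Y' := by
    have : (#(Y' + B₁) : ℝ) ≤ #(Y + B₁) := by gcongr
    nlinarith
  have e₂ : (#(Y' + B₂) : ℝ) ≤ 2 * α₂ * #Y' := by
    have : (#(Y' + B₂) : ℝ) ≤ #(Y + B₂) := by gcongr
    nlinarith
  obtain ⟨Z, hZ, hZne, hC⟩ :=
    exists_subset_card_add_add_le hne (by positivity) (by positivity) e₁ e₂
  refine ⟨Z, hZ, hZne, ?_⟩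
  have f₁ := (hC 0).1
  have f₂ := (hC B₁).2
  rw [zero_add] at f₁
  rw [add_comm B₁ Z] at f₂
  rw [← add_assoc]
  calc (#(Z + B₁ + B₂) : ℝ) ≤ 2 * (2 * α₂) * #(Z + B₁) := f₂
    _ ≤ 2 * (2 * α₂) * (2 * (2 * α₁) * #Z) := by gcongr
    _ = _ := by ring

/-- A large subset of `A` satisfies Plünnecke's inequality for threefold sums. -/
theorem exists_large_subset_card_add_three_le {A : Finset G} (hA : A.Nonempty) :
    ∃ Z ⊆ A, (#A : ℝ) ≤ 2 * #Z ∧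
      (#(Z + (A + A + A)) : ℝ) ≤ 64 * ((#(A + A) : ℝ) / #A) ^ 3 * #Z := by
  have hApos : (0 : ℝ) < #A := by exact_mod_cast hA.card_pos
  have hAA : (0 : ℝ) < #(A + A) := by exact_mod_cast (hA.add hA).card_pos
  set K : ℝ := #(A + A) / #A with hK
  have hKpos : 0 < K := by positivity
  have hKA : (#(A + A) : ℝ) = K * #A := by rw [hK]; field_simp
  clear_value K
  refine exists_large_subset_card_add_le fun Y hY hne hlarge ↦ ?_
  have e : (#(Y + A) : ℝ) ≤ 2 * K * #Y := by
    have : (#(Y + A) : ℝ) ≤ #(A + A) := by gcongr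
    nlinarith
  obtain ⟨Z, hZ, hZne, hC⟩ :=
    exists_subset_card_add_add_le hne (by positivity) (by positivity) e e
  refine ⟨Z, hZ, hZne, ?_⟩
  have f₁ := (hC 0).1
  have f₂ := (hC A).1
  have f₃ := (hC (A + A)).1
  rw [zero_add] at f₁
  have s₂ : A + Z = Z + A := add_comm _ _
  have s₃ : A + A + Z = A + Z + A := by ac_rfl
  have s₄ : Z + (A + A + A) = A + A + Z + A := by ac_rfl
  rw [s₄]
  rw [s₃] at f₃ ⊢
  rw [s₂] at f₂ f₃ ⊢
  calc (#(Z + A + A + A) : ℝ) ≤ 2 * (2 * K) * #(Z + A + A) := f₃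
    _ ≤ 2 * (2 * K) * (2 * (2 * K) * (2 * (2 * K) * #Z)) := by
      gcongr
      exact f₂.trans (by gcongr)
    _ = _ := by ring

end SubmodularPetridis

section Covering

/-- Cauchy–Schwarz for the fibres of a map. -/
theorem card_sq_le_card_image_mul_card_collisions {α β : Type*} [DecidableEq β]
    (s : Finset α) (f : α → β) :
    #s ^ 2 ≤ #(s.image f) * #{q ∈ s ×ˢ s | f q.1 = f q.2} := by
  have h1 : #s = ∑ b ∈ s.image f, #{a ∈ s | f a = b} :=
    card_eq_sum_card_fiberwise fun a ha ↦ mem_image_of_mem f ha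
  have h2 : #{q ∈ s ×ˢ s | f q.1 = f q.2} = ∑ b ∈ s.image f, #{a ∈ s | f a = b} ^ 2 := by
    rw [card_eq_sum_card_fiberwise (f := fun q ↦ f q.1) (t := s.image f)]
    · refine sum_congr rfl fun b _ ↦ ?_
      rw [sq, ← card_product]
      congr 1
      ext ⟨x, y⟩
      simp only [mem_filter, mem_product]
      grind
    · rintro ⟨x, y⟩ hx
      simp only [coe_filter, mem_product, Set.mem_ofPred_eq] at hx
      exact mem_image_of_mem f hx.1.1
  rw [h1, h2]
  exact sq_sum_le_card_mul_sum_sq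

variable {G : Type*} [AddCommGroup G] [DecidableEq G]

theorem exists_card_le_mul_card_inter_singleton_add {U C : Finset G} {L : ℝ} (hC : C.Nonempty)
    (h : (#(U + C) : ℝ) ≤ L * #C) (hU : U.Nonempty) :
    ∃ t, (#U : ℝ) ≤ L * #(U ∩ ({t} + C)) := by
  by_contra! hlt
  have hUpos : (0 : ℝ) < #U := by exact_mod_cast hU.card_pos
  have hCpos : (0 : ℝ) < #C := by exact_mod_cast hC.card_pos
  have hUC : (0 : ℝ) < #(U + C) := by exact_mod_cast (hU.add hC).card_pos
  have hL : 0 < L := pos_of_mul_pos_left (hUC.trans_le h) hCpos.le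
  have hcs := card_sq_le_card_image_mul_card_collisions (U ×ˢ C) (fun q ↦ q.1 + q.2)
  have himg : (U ×ˢ C).image (fun q ↦ q.1 + q.2) = U + C := rfl
  rw [himg, card_product] at hcs
  have hcount : #{q ∈ (U ×ˢ C) ×ˢ (U ×ˢ C) | q.1.1 + q.1.2 = q.2.1 + q.2.2} ≤
      ∑ q ∈ U ×ˢ C, #(U ∩ ({q.1 - q.2} + C)) := by
    rw [card_eq_sum_card_fiberwise (f := fun q ↦ (q.1.1, q.2.2)) (t := U ×ˢ C)]
    · refine sum_le_sum fun ⟨u, c⟩ _ ↦ ?_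
      refine card_le_card_of_injOn (fun q ↦ q.2.1) ?_ ?_
      · rintro ⟨⟨u₁, c₁⟩, ⟨u₂, c₂⟩⟩ hq
        simp only [coe_filter, mem_filter, mem_product, Set.mem_ofPred_eq, Prod.mk.injEq] at hq
        obtain ⟨⟨⟨⟨h1, h2⟩, h3, h4⟩, h5⟩, rfl, rfl⟩ := hq
        simp only [coe_inter, Set.mem_inter_iff, mem_coe]
        refine ⟨h3, mem_add.2 ⟨_, mem_singleton_self _, c₁, h2, ?_⟩⟩
        rw [sub_add_eq_add_sub, h5, add_sub_cancel_right]
      · rintro ⟨⟨u₁, c₁⟩, ⟨u₂, c₂⟩⟩ hq ⟨⟨u₁', c₁'⟩, ⟨u₂', c₂'⟩⟩ hq' he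
        simp only [coe_filter, mem_filter, mem_product, Set.mem_ofPred_eq, Prod.mk.injEq]
          at hq hq' he ⊢
        obtain ⟨⟨-, h5⟩, rfl, rfl⟩ := hq
        obtain ⟨⟨-, h5'⟩, rfl, rfl⟩ := hq'
        subst he
        simpa using h5.trans h5'.symm
    · rintro ⟨⟨u₁, c₁⟩, ⟨u₂, c₂⟩⟩ hq
      simp only [coe_filter, mem_product, Set.mem_ofPred_eq] at hq
      simpa using ⟨hq.1.1.1, hq.1.2.2⟩
  have hcount' : (#{q ∈ (U ×ˢ C) ×ˢ (U ×ˢ C) | q.1.1 + q.1.2 = q.2.1 + q.2.2} : ℝ) * L <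
      #U * #C * #U := by
    calc _ ≤ (∑ q ∈ U ×ˢ C, (#(U ∩ ({q.1 - q.2} + C)) : ℝ)) * L := by
          gcongr; exact_mod_cast hcount
      _ = ∑ q ∈ U ×ˢ C, L * (#(U ∩ ({q.1 - q.2} + C)) : ℝ) := by
          rw [sum_mul]; simp only [mul_comm]
      _ < ∑ q ∈ U ×ˢ C, (#U : ℝ) :=
          sum_lt_sum_of_nonempty (hU.product hC) fun q _ ↦ hlt _
      _ = _ := by simp [card_product]
  set E : ℝ := (#{q ∈ (U ×ˢ C) ×ˢ (U ×ˢ C) | q.1.1 + q.1.2 = q.2.1 + q.2.2} : ℝ) with hE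
  have hcs' : ((#U : ℝ) * #C) ^ 2 ≤ #(U + C) * E := by rw [hE]; exact_mod_cast hcs
  have hE0 : 0 ≤ E := by positivity
  have : ((#U : ℝ) * #C) ^ 2 < #U * #C * #U * #C := by
    calc _ ≤ #(U + C) * E := hcs'
      _ ≤ L * #C * E := by gcongr
      _ = E * L * #C := by ring
      _ < _ := by gcongr
  nlinarith

theorem exists_card_le_mul_card_inter_singleton_add_neg {U C : Finset G} {L : ℝ}
    (hC : C.Nonempty) (h : (#(U + C) : ℝ) ≤ L * #C) (hU : U.Nonempty) :
    ∃ t, (#U : ℝ) ≤ L * #(U ∩ ({t} + -C)) := by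
  by_contra! hlt
  have hCpos : (0 : ℝ) < #C := by exact_mod_cast hC.card_pos
  have hUC : (0 : ℝ) < #(U + C) := by exact_mod_cast (hU.add hC).card_pos
  have hL : 0 < L := pos_of_mul_pos_left (hUC.trans_le h) hCpos.le
  have hcount : #U * #C ≤ ∑ t ∈ U + C, #(U ∩ ({t} + -C)) := by
    rw [← card_product, card_eq_sum_card_fiberwise (f := fun q ↦ q.1 + q.2) (t := U + C)]
    · refine sum_le_sum fun t _ ↦ card_le_card_of_injOn (fun q ↦ q.1) ?_ ?_
      · rintro ⟨u, c⟩ hq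
        simp only [coe_filter, mem_product, Set.mem_ofPred_eq] at hq
        obtain ⟨⟨h1, h2⟩, rfl⟩ := hq
        simp only [coe_inter, Set.mem_inter_iff, mem_coe]
        exact ⟨h1, mem_add.2 ⟨_, mem_singleton_self _, -c, by simpa using h2, by simp⟩⟩
      · rintro ⟨u, c⟩ hq ⟨u', c'⟩ hq' he
        simp only [coe_filter, mem_product, Set.mem_ofPred_eq] at hq hq' he
        subst he
        simpa using hq.2.trans hq'.2.symm
    · rintro ⟨u, c⟩ hq
      simp only [coe_product, Set.mem_prod, mem_coe] at hq
      exact add_mem_add hq.1 hq.2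
  have : L * ((#U : ℝ) * #C) < #(U + C) * #U := by
    calc _ ≤ L * (∑ t ∈ U + C, (#(U ∩ ({t} + -C)) : ℝ)) := by
          gcongr; exact_mod_cast hcount
      _ = ∑ t ∈ U + C, L * (#(U ∩ ({t} + -C)) : ℝ) := by rw [mul_sum]
      _ < ∑ t ∈ U + C, (#U : ℝ) := sum_lt_sum_of_nonempty (hU.add hC) fun q _ ↦ hlt _
      _ = _ := by simp
  have h3 : (#(U + C) : ℝ) * #U ≤ L * #C * #U := by gcongr
  linarith

/-- If every nonempty subset of `Y` has a large intersection with a translate of `C`, then few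
translates of `C` cover most of `Y`. -/
theorem exists_large_subset_subset_add {Y C : Finset G} {L ε : ℝ} (hL : 0 < L) (hε : 0 < ε)
    (h : ∀ U ⊆ Y, U.Nonempty → ∃ t, (#U : ℝ) ≤ L * #(U ∩ ({t} + C))) :
    ∃ T, ∃ Y' ⊆ Y, (#(Y \ Y') : ℝ) ≤ ε * #Y ∧ (#T : ℝ) ≤ L / ε ∧ Y' ⊆ T + C := by
  by_contra! hcon
  obtain rfl | hY := Y.eq_empty_or_nonempty
  · exact hcon ∅ ∅ (by simp) (by simp) (by simp; positivity) (by simp)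
  have hYpos : (0 : ℝ) < #Y := by exact_mod_cast hY.card_pos
  have hbound : ∀ T : Finset G, (#T : ℝ) * (ε * #Y) ≤ L * #(Y ∩ (T + C)) → (#T : ℝ) ≤ L / ε := by
    intro T hT
    rw [le_div_iff₀ hε]
    have : (#(Y ∩ (T + C)) : ℝ) ≤ #Y := by gcongr; exact inter_subset_left
    have h2 : (#T : ℝ) * (ε * #Y) ≤ L * #Y := hT.trans (by gcongr)
    refine le_of_mul_le_mul_right ?_ hYpos
    linarith
  have hstep : ∀ k : ℕ, ∃ T : Finset G, #T = k ∧ (#T : ℝ) * (ε * #Y) ≤ L * #(Y ∩ (T + C)) := by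
    intro k
    induction k with
    | zero => exact ⟨∅, by simp⟩
    | succ k ih =>
      obtain ⟨T, hTk, hT⟩ := ih
      have hbig : ε * #Y < #(Y \ (T + C)) := by
        by_contra! hle
        exact hcon T (Y ∩ (T + C)) inter_subset_left (by rwa [sdiff_inter_self_left])
          (hbound T hT) inter_subset_right
      have hpos : (0 : ℝ) < #(Y \ (T + C)) := lt_trans (by positivity) hbig
      obtain ⟨t, ht⟩ := h (Y \ (T + C)) sdiff_subset (card_pos.1 (by exact_mod_cast hpos))
      have htT : t ∉ T := by
        intro htT
        have : (Y \ (T + C)) ∩ ({t} + C) = ∅ := by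
          rw [← disjoint_iff_inter_eq_empty]
          exact sdiff_disjoint.mono_right (add_subset_add_right (singleton_subset_iff.2 htT))
        rw [this] at ht
        simp only [card_empty, Nat.cast_zero, mul_zero] at ht
        linarith
      refine ⟨insert t T, by rw [card_insert_of_notMem htT, hTk], ?_⟩
      have hle : #(Y ∩ (T + C)) + #((Y \ (T + C)) ∩ ({t} + C)) ≤ #(Y ∩ (insert t T + C)) := by
        rw [← card_union_of_disjoint]
        · refine card_le_card ?_
          rw [insert_eq, union_add]
          intro y
          simp only [mem_union, mem_inter, mem_sdiff]
          tauto
        · rw [disjoint_left]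
          simp only [mem_inter, mem_sdiff]
          tauto
      have hle' : (#(Y ∩ (T + C)) : ℝ) + #((Y \ (T + C)) ∩ ({t} + C)) ≤
          #(Y ∩ (insert t T + C)) := by exact_mod_cast hle
      rw [card_insert_of_notMem htT]
      push_cast
      nlinarith
  obtain ⟨k, hk⟩ := exists_nat_gt (L / ε)
  obtain ⟨T, hTk, hT⟩ := hstep k
  have := hbound T hT
  rw [hTk] at this
  linarith

end Covering

section Pivot

variable {p : ℕ} [Fact p.Prime]

/-- For some dilation factor `ξ` the additive energy of `B` and `ξB` is at most `2|B|²`. -/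
theorem exists_card_collisions_le (B : Finset (ZMod p)) (hB : #B ^ 2 ≤ p) :
    ∃ ξ : ZMod p,
      #{q ∈ (B ×ˢ B) ×ˢ (B ×ˢ B) | q.1.1 + ξ * q.1.2 = q.2.1 + ξ * q.2.2} ≤ 2 * #B ^ 2 := by
  by_contra! hlt
  have hswap : ∑ ξ : ZMod p,
      #{q ∈ (B ×ˢ B) ×ˢ (B ×ˢ B) | q.1.1 + ξ * q.1.2 = q.2.1 + ξ * q.2.2} =
      ∑ q ∈ (B ×ˢ B) ×ˢ (B ×ˢ B),
        #{ξ : ZMod p | q.1.1 + ξ * q.1.2 = q.2.1 + ξ * q.2.2} := by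
    simp only [card_filter]
    exact sum_comm
  have hterm : ∀ q ∈ (B ×ˢ B) ×ˢ (B ×ˢ B),
      #{ξ : ZMod p | q.1.1 + ξ * q.1.2 = q.2.1 + ξ * q.2.2} ≤ 1 + if q.1 = q.2 then p else 0 := by
    rintro ⟨⟨x, y⟩, ⟨x', y'⟩⟩ -
    split_ifs with h
    · refine (card_le_univ _).trans ?_
      rw [ZMod.card]
      omega
    · rw [add_zero, card_le_one]
      simp only [mem_filter, mem_univ, true_and]
      intro ξ h1 η h2
      by_contra hne
      have hy : y = y' := by
        have : (ξ - η) * (y - y') = 0 := by linear_combination h1 - h2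
        rcases mul_eq_zero.1 this with h3 | h3
        · exact absurd (sub_eq_zero.1 h3) hne
        · exact sub_eq_zero.1 h3
      subst hy
      exact h (by simpa using h1)
  have hdiag : #{q ∈ (B ×ˢ B) ×ˢ (B ×ˢ B) | q.1 = q.2} ≤ #B ^ 2 := by
    rw [sq, ← card_product]
    refine card_le_card_of_injOn (fun q ↦ q.1) ?_ ?_
    · intro q hq
      simp only [coe_filter, mem_product, Set.mem_ofPred_eq] at hq
      simpa using hq.1.1
    · intro q hq q' hq' he
      simp only [coe_filter, Set.mem_ofPred_eq] at hq hq'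
      exact Prod.ext he (hq.2.symm.trans (he.trans hq'.2))
  have hupper : ∑ q ∈ (B ×ˢ B) ×ˢ (B ×ˢ B),
      #{ξ : ZMod p | q.1.1 + ξ * q.1.2 = q.2.1 + ξ * q.2.2} ≤ #B ^ 4 + #B ^ 2 * p := by
    refine (sum_le_sum hterm).trans ?_
    rw [sum_add_distrib, ← sum_filter, sum_const, sum_const]
    simp only [card_product, smul_eq_mul, mul_one]
    have : #B * #B * (#B * #B) = #B ^ 4 := by ring
    rw [this]
    gcongr
  have hlower : p * (2 * #B ^ 2) < ∑ ξ : ZMod p,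
      #{q ∈ (B ×ˢ B) ×ˢ (B ×ˢ B) | q.1.1 + ξ * q.1.2 = q.2.1 + ξ * q.2.2} := by
    calc p * (2 * #B ^ 2) = ∑ _ξ : ZMod p, 2 * #B ^ 2 := by simp [ZMod.card]
      _ < _ := sum_lt_sum_of_nonempty univ_nonempty fun ξ _ ↦ hlt ξ
  rw [hswap] at hlower
  have : #B ^ 4 ≤ #B ^ 2 * p := by
    calc #B ^ 4 = #B ^ 2 * #B ^ 2 := by ring
      _ ≤ _ := by gcongr
  linarith

/-- The quotient set of differences of `B` contains `ξ` or `ξ - 1` for some `ξ` such that the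
additive energy of `B` and `ξB` is at most `2|B|²`. -/
theorem exists_pivot {B : Finset (ZMod p)} (hB : #B ^ 2 ≤ p) (hB2 : 1 < #B) :
    ∃ a ∈ B, ∃ b ∈ B, ∃ c ∈ B, ∃ d ∈ B, c ≠ d ∧
      ∃ ξ : ZMod p, (ξ = (a - b) / (c - d) ∨ ξ = (a - b) / (c - d) + 1) ∧
        #{q ∈ (B ×ˢ B) ×ˢ (B ×ˢ B) | q.1.1 + ξ * q.1.2 = q.2.1 + ξ * q.2.2} ≤ 2 * #B ^ 2 := by
  by_contra! hcon
  set R : Set (ZMod p) := {r | ∃ a ∈ B, ∃ b ∈ B, ∃ c ∈ B, ∃ d ∈ B, c ≠ d ∧ r = (a - b) / (c - d)}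
  obtain ⟨u, hu, v, hv, huv⟩ := one_lt_card.1 hB2
  have hzero : (0 : ZMod p) ∈ R := ⟨u, hu, u, hu, u, hu, v, hv, huv, by simp⟩
  have hsucc : ∀ r ∈ R, r + 1 ∈ R := by
    rintro r ⟨a, ha, b, hb, c, hc, d, hd, hcd, rfl⟩
    by_contra hnot
    refine absurd (hcon a ha b hb c hc d hd hcd _ (Or.inr rfl)) (not_lt.2 ?_)
    set ξ := (a - b) / (c - d) + 1
    have hcard : #B ^ 2 ≤ 2 * #B ^ 2 := by omega
    refine le_trans ?_ hcard
    rw [sq, ← card_product]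
    refine card_le_card_of_injOn (fun q ↦ q.1) ?_ ?_
    · intro q hq
      simp only [coe_filter, mem_product, Set.mem_ofPred_eq] at hq
      simpa using hq.1.1
    · have hdiag : ∀ x ∈ B, ∀ y ∈ B, ∀ x' ∈ B, ∀ y' ∈ B, x + ξ * y = x' + ξ * y' →
          x = x' ∧ y = y' := by
        intro x hx y hy x' hx' y' hy' he
        by_cases h : y = y'
        · subst h
          exact ⟨by simpa using he, rfl⟩
        · refine absurd ⟨x', hx', x, hx, y, hy, y', hy', h, ?_⟩ hnot
          rw [eq_div_iff (sub_ne_zero.2 h)]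
          linear_combination he
      rintro ⟨⟨x, y⟩, ⟨x', y'⟩⟩ hq ⟨⟨z, w⟩, ⟨z', w'⟩⟩ hq' he
      simp only [coe_filter, mem_product, Set.mem_ofPred_eq] at hq hq'
      obtain ⟨h1, h2⟩ := hdiag x hq.1.1.1 y hq.1.1.2 x' hq.1.2.1 y' hq.1.2.2 hq.2
      obtain ⟨h3, h4⟩ := hdiag z hq'.1.1.1 w hq'.1.1.2 z' hq'.1.2.1 w' hq'.1.2.2 hq'.2
      simp only [Prod.mk.injEq] at he
      obtain ⟨rfl, rfl⟩ := he
      subst h1 h2 h3 h4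
      rfl
  have hall : ∀ n : ℕ, (n : ZMod p) ∈ R := by
    intro n
    induction n with
    | zero => simpa using hzero
    | succ n ih => simpa using hsucc _ ih
  obtain ⟨ξ, hξ⟩ := exists_card_collisions_le B hB
  have hξR : ξ ∈ R := by
    have := hall ξ.val
    rwa [ZMod.natCast_zmod_val] at this
  obtain ⟨a, ha, b, hb, c, hc, d, hd, hcd, h⟩ := hξR
  exact absurd (hcon a ha b hb c hc d hd hcd ξ (Or.inl h)) (not_lt.2 hξ)

theorem card_sq_mul_card_sq_le_of_card_collisions_le {B U V : Finset (ZMod p)} {ξ : ZMod p}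
    (h : #{q ∈ (B ×ˢ B) ×ˢ (B ×ˢ B) | q.1.1 + ξ * q.1.2 = q.2.1 + ξ * q.2.2} ≤ 2 * #B ^ 2)
    (hU : U ⊆ B) (hV : V ⊆ B) :
    #U ^ 2 * #V ^ 2 ≤ #(U + ξ • V) * (2 * #B ^ 2) := by
  have hcs := card_sq_le_card_image_mul_card_collisions (U ×ˢ V) (fun q ↦ q.1 + ξ * q.2)
  have himg : (U ×ˢ V).image (fun q ↦ q.1 + ξ * q.2) ⊆ U + ξ • V := by
    rintro z hz
    obtain ⟨⟨u, v⟩, huv, rfl⟩ := mem_image.1 hz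
    rw [mem_product] at huv
    exact add_mem_add huv.1 (smul_mem_smul_finset huv.2)
  rw [card_product, mul_pow] at hcs
  refine hcs.trans (Nat.mul_le_mul (card_le_card himg) (le_trans (card_le_card ?_) h))
  exact filter_subset_filter _ (product_subset_product (product_subset_product hU hV)
    (product_subset_product hU hV))

end Pivot

section Dilates

variable {F : Type*} [Field F] [DecidableEq F]

theorem card_smul_add_inter_le {X B : Finset F} {a e : F} {M N : ℝ} (ha : a ≠ 0)
    (hN : 0 < N) (hM : (#(X + X) : ℝ) ≤ M) (hB : B ⊆ X) (hint : N ≤ #(a • X ∩ e • X)) :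
    (#(a • B + a • X ∩ e • X) : ℝ) ≤ M / N * #(a • X ∩ e • X) := by
  have hM0 : 0 ≤ M := le_trans (by positivity) hM
  calc (#(a • B + a • X ∩ e • X) : ℝ) ≤ #(a • (X + X)) := by
        rw [smul_add]
        gcongr
        exact inter_subset_left
    _ = #(X + X) := by rw [card_smul_finset₀ ha]
    _ ≤ M / N * N := by rwa [div_mul_cancel₀ _ hN.ne']
    _ ≤ _ := by gcongr

/-- If `aX` and `eX` have large intersection, then few translates of `eX` cover most of `aB`. -/
theorem exists_large_subset_smul_subset {X B : Finset F} {a e : F} {M N : ℝ} (ha : a ≠ 0)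
    (hM₀ : 0 < M) (hN : 0 < N) (hM : (#(X + X) : ℝ) ≤ M) (hB : B ⊆ X)
    (hint : N ≤ #(a • X ∩ e • X)) :
    ∃ T, ∃ Y ⊆ B, (#(B \ Y) : ℝ) ≤ 1 / 8 * #B ∧ (#T : ℝ) ≤ M / N / (1 / 8) ∧
      a • Y ⊆ T + e • X := by
  have hC : (a • X ∩ e • X).Nonempty := card_pos.1 (by exact_mod_cast hN.trans_le hint)
  obtain ⟨T, Y', hY', hcard, hT, hsub⟩ :=
    exists_large_subset_subset_add (Y := a • B) (C := a • X ∩ e • X) (L := M / N) (ε := 1 / 8)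
      (by positivity) (by norm_num) fun U hU hUne ↦
        exists_card_le_mul_card_inter_singleton_add hC
          (le_trans (by gcongr) (card_smul_add_inter_le ha hN hM hB hint)) hUne
  refine ⟨T, a⁻¹ • Y', ?_, ?_, hT, ?_⟩
  · rwa [← subset_smul_finset_iff₀ ha]
  · rwa [← card_smul_finset₀ ha (B \ _), smul_finset_sdiff₀ ha, smul_inv_smul₀ ha,
      ← card_smul_finset₀ ha B]
  · rw [smul_inv_smul₀ ha]
    exact hsub.trans (add_subset_add_left inter_subset_right)

/-- If `aX` and `eX` have large intersection, then few translates of `eX` cover most of `-aB`. -/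
theorem exists_large_subset_neg_smul_subset {X B : Finset F} {a e : F} {M N : ℝ} (ha : a ≠ 0)
    (hM₀ : 0 < M) (hN : 0 < N) (hM : (#(X + X) : ℝ) ≤ M) (hB : B ⊆ X)
    (hint : N ≤ #(a • X ∩ e • X)) :
    ∃ T, ∃ Y ⊆ B, (#(B \ Y) : ℝ) ≤ 1 / 8 * #B ∧ (#T : ℝ) ≤ M / N / (1 / 8) ∧
      -(a • Y) ⊆ T + e • X := by
  have hC : (a • X ∩ e • X).Nonempty := card_pos.1 (by exact_mod_cast hN.trans_le hint)
  obtain ⟨T, Y', hY', hcard, hT, hsub⟩ :=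
    exists_large_subset_subset_add (Y := a • B) (C := -(a • X ∩ e • X)) (L := M / N) (ε := 1 / 8)
      (by positivity) (by norm_num) fun U hU hUne ↦
        exists_card_le_mul_card_inter_singleton_add_neg hC
          (le_trans (by gcongr) (card_smul_add_inter_le ha hN hM hB hint)) hUne
  refine ⟨-T, a⁻¹ • Y', ?_, ?_, by rwa [card_neg], ?_⟩
  · rwa [← subset_smul_finset_iff₀ ha]
  · rwa [← card_smul_finset₀ ha (B \ _), smul_finset_sdiff₀ ha, smul_inv_smul₀ ha,
      ← card_smul_finset₀ ha B]
  · rw [smul_inv_smul₀ ha]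
    refine (neg_subset_neg (hsub.trans (add_subset_add_left
      (neg_subset_neg inter_subset_right)))).trans_eq ?_
    rw [neg_add, neg_neg (e • X)]

/-- If `aX ∩ eX` is large for all `a ∈ B`, then most of `B` has a small sum with its dilate by
a quotient of differences of `B`. -/
theorem exists_large_subset_card_add_smul_le {X B : Finset F} {a b c d e : F} {M N Q : ℝ}
    (hX : 0 ∉ X) (hM₀ : 0 < M) (hN : 0 < N) (hM : (#(X + X) : ℝ) ≤ M)
    (hQ : (#(X + (X + X + X)) : ℝ) ≤ Q) (hB : B ⊆ X)
    (hint : ∀ x ∈ B, N ≤ #(x • X ∩ e • X)) (ha : a ∈ B) (hb : b ∈ B) (hc : c ∈ B) (hd : d ∈ B)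
    (hcd : c ≠ d) :
    ∃ Y ⊆ B, (#B : ℝ) ≤ 2 * #Y ∧
      (#(Y + ((a - b) / (c - d)) • Y) : ℝ) ≤ (M / N / (1 / 8)) ^ 4 * Q := by
  have hne : ∀ x ∈ B, x ≠ 0 := fun x hx h ↦ hX (h ▸ hB hx)
  obtain ⟨T₁, Y₁, hY₁, hc₁, hT₁, hs₁⟩ :=
    exists_large_subset_smul_subset (hne c hc) hM₀ hN hM hB (hint c hc)
  obtain ⟨T₂, Y₂, hY₂, hc₂, hT₂, hs₂⟩ :=
    exists_large_subset_neg_smul_subset (hne d hd) hM₀ hN hM hB (hint d hd)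
  obtain ⟨T₃, Y₃, hY₃, hc₃, hT₃, hs₃⟩ :=
    exists_large_subset_smul_subset (hne a ha) hM₀ hN hM hB (hint a ha)
  obtain ⟨T₄, Y₄, hY₄, hc₄, hT₄, hs₄⟩ :=
    exists_large_subset_neg_smul_subset (hne b hb) hM₀ hN hM hB (hint b hb)
  set Y := B \ ((B \ Y₁) ∪ (B \ Y₂) ∪ (B \ Y₃) ∪ (B \ Y₄)) with hY
  have hYB : Y ⊆ B := sdiff_subset
  have hYi : Y ⊆ Y₁ ∧ Y ⊆ Y₂ ∧ Y ⊆ Y₃ ∧ Y ⊆ Y₄ := by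
    refine ⟨?_, ?_, ?_, ?_⟩ <;> intro y hy <;>
      simp only [hY, mem_sdiff, mem_union, not_or, not_and, not_not] at hy <;> tauto
  refine ⟨Y, hYB, ?_, ?_⟩
  · have h1 : #B ≤ #Y + (#(B \ Y₁) + #(B \ Y₂) + #(B \ Y₃) + #(B \ Y₄)) := by
      have h2 := le_card_sdiff ((B \ Y₁) ∪ (B \ Y₂) ∪ (B \ Y₃) ∪ (B \ Y₄)) B
      rw [← hY] at h2
      have h3 := card_union_le ((B \ Y₁) ∪ (B \ Y₂) ∪ (B \ Y₃)) (B \ Y₄)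
      have h4 := card_union_le ((B \ Y₁) ∪ (B \ Y₂)) (B \ Y₃)
      have h5 := card_union_le (B \ Y₁) (B \ Y₂)
      omega
    have h1' : (#B : ℝ) ≤ #Y + (#(B \ Y₁) + #(B \ Y₂) + #(B \ Y₃) + #(B \ Y₄)) := by
      exact_mod_cast h1
    linarith
  · have hcd0 : c - d ≠ 0 := sub_ne_zero.2 hcd
    have hsub : (c - d) • (Y + ((a - b) / (c - d)) • Y) ⊆
        (T₁ + T₂ + T₃ + T₄) + e • (X + (X + X + X)) := by
      intro z hz
      obtain ⟨w, hw, rfl⟩ := mem_smul_finset.1 hz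
      obtain ⟨y, hy, w', hw', rfl⟩ := mem_add.1 hw
      obtain ⟨y', hy', rfl⟩ := mem_smul_finset.1 hw'
      obtain ⟨t₁, ht₁, x₁, hx₁, e₁⟩ := mem_add.1 (hs₁ (smul_mem_smul_finset (hYi.1 hy)))
      obtain ⟨t₂, ht₂, x₂, hx₂, e₂⟩ :=
        mem_add.1 (hs₂ (neg_mem_neg (smul_mem_smul_finset (hYi.2.1 hy))))
      obtain ⟨t₃, ht₃, x₃, hx₃, e₃⟩ := mem_add.1 (hs₃ (smul_mem_smul_finset (hYi.2.2.1 hy')))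
      obtain ⟨t₄, ht₄, x₄, hx₄, e₄⟩ :=
        mem_add.1 (hs₄ (neg_mem_neg (smul_mem_smul_finset (hYi.2.2.2 hy'))))
      refine mem_add.2 ⟨t₁ + t₂ + t₃ + t₄,
        add_mem_add (add_mem_add (add_mem_add ht₁ ht₂) ht₃) ht₄, x₁ + (x₂ + x₃ + x₄), ?_, ?_⟩
      · rw [smul_add, smul_add, smul_add]
        exact add_mem_add hx₁ (add_mem_add (add_mem_add hx₂ hx₃) hx₄)
      · simp only [smul_eq_mul] at e₁ e₂ e₃ e₄ ⊢
        rw [mul_add, ← mul_assoc, mul_div_cancel₀ _ hcd0]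
        linear_combination e₁ + e₂ + e₃ + e₄
    have hT : (#(T₁ + T₂ + T₃ + T₄) : ℝ) ≤ (M / N / (1 / 8)) ^ 4 := by
      calc (#(T₁ + T₂ + T₃ + T₄) : ℝ) ≤ #T₁ * #T₂ * #T₃ * #T₄ := by
            refine mod_cast card_add_le.trans ?_
            gcongr
            refine card_add_le.trans ?_
            gcongr
            exact card_add_le
        _ ≤ M / N / (1 / 8) * (M / N / (1 / 8)) * (M / N / (1 / 8)) * (M / N / (1 / 8)) := by
            gcongr
        _ = _ := by ring
    calc (#(Y + ((a - b) / (c - d)) • Y) : ℝ)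
        = #((c - d) • (Y + ((a - b) / (c - d)) • Y)) := by rw [card_smul_finset₀ hcd0]
      _ ≤ #((T₁ + T₂ + T₃ + T₄) + e • (X + (X + X + X))) := by gcongr
      _ ≤ #(T₁ + T₂ + T₃ + T₄) * #(e • (X + (X + X + X))) := by exact_mod_cast card_add_le
      _ ≤ (M / N / (1 / 8)) ^ 4 * Q := by
        gcongr
        exact le_trans (by exact_mod_cast card_image_le) hQ

end Dilates

section SumProduct

theorem card_cube_mul_pow_four_le {p : ℕ} [Fact p.Prime] {X B : Finset (ZMod p)} {e : ZMod p}
    {M N Q : ℝ} (hX : 0 ∉ X) (hN : 0 < N) (hM : (#(X + X) : ℝ) ≤ M)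
    (hQ : (#(X + (X + X + X)) : ℝ) ≤ Q) (hB : B ⊆ X)
    (hint : ∀ x ∈ B, N ≤ #(x • X ∩ e • X)) (hBp : #B ^ 2 ≤ p) (hB1 : 1 < #B) :
    (#B : ℝ) ^ 3 * N ^ 4 ≤ 2 ^ 24 * M ^ 5 * Q := by
  obtain ⟨a, ha, b, hb, c, hc, d, hd, hcd, ξ, hξ, hcol⟩ := exists_pivot hBp hB1
  have hBpos : (0 : ℝ) < #B := by exact_mod_cast (by omega : 0 < #B)
  have hBM : (#B : ℝ) ≤ M := by
    refine le_trans ?_ hM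
    have hXne : X.Nonempty := (card_pos.1 (by omega : 0 < #B)).mono hB
    exact_mod_cast (card_le_card hB).trans (card_le_card_add_right hXne)
  have hM₀ : 0 < M := hBpos.trans_le hBM
  obtain ⟨Y, hYB, hBY, hS⟩ := exists_large_subset_card_add_smul_le hX hM₀ hN hM hQ hB hint
    ha hb hc hd hcd
  set r := (a - b) / (c - d)
  have hYpos : (0 : ℝ) < #Y := by linarith
  have hYne : Y.Nonempty := card_pos.1 (by exact_mod_cast hYpos)
  obtain ⟨S, hSdef⟩ : ∃ S : ℝ, S = #(Y + r • Y) := ⟨_, rfl⟩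
  rw [← hSdef] at hS
  have hSpos : 0 < S := by
    rw [hSdef]
    exact Nat.cast_pos.2 (card_pos.2 (hYne.add hYne.smul_finset))
  have key : (#B : ℝ) ^ 3 ≤ 4096 * M * S := by
    rcases hξ with rfl | rfl
    · have h : (#Y : ℝ) ^ 2 * #Y ^ 2 ≤ S * (2 * #B ^ 2) := by
        rw [hSdef]
        exact_mod_cast card_sq_mul_card_sq_le_of_card_collisions_le hcol hYB hYB
      have h1 : (#B : ℝ) ^ 2 ≤ 4 * #Y ^ 2 := by nlinarith
      have h2 : (#B : ℝ) ^ 2 * #B ^ 2 ≤ 4 * #Y ^ 2 * (4 * #Y ^ 2) := by gcongr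
      have h3 : (#B : ℝ) ^ 2 * #B ^ 2 ≤ 32 * S * #B ^ 2 := by linarith
      have h4 : (#B : ℝ) ^ 2 ≤ 32 * S := le_of_mul_le_mul_right h3 (by positivity)
      have h5 : (#B : ℝ) ^ 2 * #B ≤ 32 * S * M := by gcongr
      nlinarith [mul_pos hSpos hM₀]
    · have hYY : (#(Y + Y) : ℝ) ≤ M := by
        refine le_trans ?_ hM
        have := hYB.trans hB
        gcongr
      obtain ⟨Z, hZY, hZ, hZS⟩ := exists_large_subset_card_add_add_le (Y := Y) (B₁ := Y)
        (B₂ := r • Y) (α₁ := M / #Y) (α₂ := S / #Y) (by positivity) (by positivity)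
        (by rwa [div_mul_cancel₀ _ hYpos.ne']) (by rw [div_mul_cancel₀ _ hYpos.ne', hSdef])
      have h : (#Z : ℝ) ^ 2 * #Y ^ 2 ≤ #(Z + (r + 1) • Y) * (2 * #B ^ 2) := by
        exact_mod_cast card_sq_mul_card_sq_le_of_card_collisions_le hcol (hZY.trans hYB) hYB
      have hsub : Z + (r + 1) • Y ⊆ Z + (Y + r • Y) := by
        refine add_subset_add_left fun w hw ↦ ?_
        obtain ⟨y, hy, rfl⟩ := mem_smul_finset.1 hw
        rw [add_smul, one_smul, add_comm (r • y)]
        exact add_mem_add hy (smul_mem_smul_finset hy)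
      have hsub' : (#(Z + (r + 1) • Y) : ℝ) ≤ #(Z + (Y + r • Y)) := by gcongr
      have hZpos : (0 : ℝ) < #Z := by linarith
      have hZYle : (#Z : ℝ) ≤ #Y := by gcongr
      have h1 : (#Z : ℝ) ^ 2 * #Y ^ 2 ≤ 16 * (M / #Y) * (S / #Y) * #Z * (2 * #B ^ 2) :=
        h.trans (by gcongr; exact hsub'.trans hZS)
      have h2 : (#Z : ℝ) * #Y ^ 4 ≤ 32 * M * S * #B ^ 2 := by
        have e1 : 16 * (M / #Y) * (S / #Y) * #Z * (2 * (#B : ℝ) ^ 2) =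
          (32 * M * S * #B ^ 2) * #Z / #Y ^ 2 := by field_simp; ring
        rw [e1, le_div_iff₀ (by positivity)] at h1
        refine le_of_mul_le_mul_right ?_ hZpos
        linarith
      have h3 : (#B : ℝ) ≤ 4 * #Z := by linarith
      have h4 : (#B : ℝ) ^ 4 ≤ (2 * #Y) ^ 4 := by gcongr
      have h5 : (#B : ℝ) * #B ^ 4 ≤ 4 * #Z * (2 * #Y) ^ 4 := by gcongr
      have h6 : (#B : ℝ) ^ 3 * #B ^ 2 ≤ 2048 * M * S * #B ^ 2 := by nlinarith
      have h7 := le_of_mul_le_mul_right h6 (by positivity)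
      nlinarith [mul_pos hSpos hM₀]
  calc (#B : ℝ) ^ 3 * N ^ 4 ≤ 4096 * M * S * N ^ 4 := by gcongr
    _ ≤ 4096 * M * ((M / N / (1 / 8)) ^ 4 * Q) * N ^ 4 := by gcongr
    _ = _ := by field_simp; ring

/-- A weak-type bound on level sets gives a bound on the sum. -/
theorem sum_pow_four_le_of_level_sets {α : Type*} [DecidableEq α] (s : Finset α) (f : α → ℝ)
    (hf : ∀ a ∈ s, 0 ≤ f a) {T : ℝ} (hT : 0 ≤ T)
    (h : ∀ u ⊆ s, ∀ a ∈ u, (∀ x ∈ u, f a ≤ f x) → (#u : ℝ) ^ 3 * f a ^ 4 ≤ T ^ 4) {k : ℝ}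
    (hk : 0 ≤ k) (hks : k ^ 4 = #s) :
    ∑ a ∈ s, f a ≤ 4 * T * k := by
  induction s using Finset.induction_on_min_value f generalizing k with
  | empty => simp; positivity
  | insert a s ha hmin ih =>
    have hcard : k ^ 4 = #s + 1 := by rw [hks, card_insert_of_notMem ha]; push_cast; ring
    obtain ⟨l, hl, hls⟩ : ∃ l : ℝ, 0 ≤ l ∧ l ^ 4 = #s :=
      ⟨(#s : ℝ) ^ ((1 : ℝ) / 4), by positivity, by
        rw [← Real.rpow_natCast, ← Real.rpow_mul (by positivity)]; norm_num⟩
    have ih' := ih (fun x hx ↦ hf x (mem_insert_of_mem hx))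
      (fun u hu ↦ h u (hu.trans (subset_insert _ _))) hl hls
    rw [sum_insert ha]
    have hfa : 0 ≤ f a := hf a (mem_insert_self _ _)
    have hlev := h _ Subset.rfl a (mem_insert_self _ _) (by
      intro x hx
      rcases mem_insert.1 hx with rfl | hx
      · exact le_rfl
      · exact hmin x hx)
    rw [← hks] at hlev
    have hle : k ^ 3 * f a ≤ T := by
      refine le_of_pow_le_pow_left₀ (n := 4) (by norm_num) hT ?_
      calc (k ^ 3 * f a) ^ 4 = (k ^ 4) ^ 3 * f a ^ 4 := by ring
        _ ≤ T ^ 4 := hlev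
    have hlk : l ≤ k := le_of_pow_le_pow_left₀ (n := 4) (by norm_num) hk (by linarith)
    have hdiff : 1 ≤ 4 * k ^ 3 * (k - l) := by
      have h1 : k ^ 4 - l ^ 4 = (k ^ 3 + k ^ 2 * l + k * l ^ 2 + l ^ 3) * (k - l) := by ring
      have h2 : k ^ 4 - l ^ 4 = 1 := by linarith
      have h3 : k ^ 3 + k ^ 2 * l + k * l ^ 2 + l ^ 3 ≤ 4 * k ^ 3 := by
        have e1 : k ^ 2 * l ≤ k ^ 2 * k := by gcongr
        have e2 : k * l ^ 2 ≤ k * k ^ 2 := by gcongr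
        have e3 : l ^ 3 ≤ k ^ 3 := by gcongr
        nlinarith
      have h4 : 0 ≤ k - l := by linarith
      nlinarith
    have : f a ≤ 4 * T * (k - l) := by
      calc f a ≤ f a * (4 * k ^ 3 * (k - l)) := le_mul_of_one_le_right hfa hdiff
        _ = 4 * (k ^ 3 * f a) * (k - l) := by ring
        _ ≤ _ := by
          have : 0 ≤ k - l := by linarith
          gcongr
    linarith

/-- The collisions of the multiplication map on `X` concentrate on a popular dilate. -/
theorem exists_card_cube_le_sum_card_inter {p : ℕ} [Fact p.Prime] {X : Finset (ZMod p)}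
    (hX : 0 ∉ X) (hne : X.Nonempty) :
    ∃ e ∈ X, #X ^ 3 ≤ #(X * X) * ∑ a ∈ X, #(a • X ∩ e • X) := by
  by_contra! hlt
  have hcs := card_sq_le_card_image_mul_card_collisions (X ×ˢ X) (fun q ↦ q.1 * q.2)
  have himg : (X ×ˢ X).image (fun q ↦ q.1 * q.2) = X * X := rfl
  rw [himg, card_product] at hcs
  have hcount : #{q ∈ (X ×ˢ X) ×ˢ (X ×ˢ X) | q.1.1 * q.1.2 = q.2.1 * q.2.2} ≤
      ∑ e ∈ X, ∑ a ∈ X, #(a • X ∩ e • X) := by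
    rw [← sum_product' X X (fun e a ↦ #(a • X ∩ e • X)),
      card_eq_sum_card_fiberwise (f := fun q ↦ (q.2.1, q.1.1)) (t := X ×ˢ X)]
    · refine sum_le_sum fun ⟨e, a⟩ hea ↦ ?_
      rw [mem_product] at hea
      have he0 : e ≠ 0 := fun h ↦ hX (h ▸ hea.1)
      have ha0 : a ≠ 0 := fun h ↦ hX (h ▸ hea.2)
      refine card_le_card_of_injOn (fun q ↦ q.1.1 * q.1.2) ?_ ?_
      · rintro ⟨⟨x, y⟩, ⟨x', y'⟩⟩ hq
        simp only [coe_filter, mem_filter, mem_product, Set.mem_ofPred_eq, Prod.mk.injEq] at hq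
        obtain ⟨⟨⟨⟨-, h2⟩, -, h4⟩, h5⟩, rfl, rfl⟩ := hq
        simp only [coe_inter, Set.mem_inter_iff, mem_coe]
        exact ⟨smul_mem_smul_finset h2, h5 ▸ smul_mem_smul_finset h4⟩
      · rintro ⟨⟨x, y⟩, ⟨x', y'⟩⟩ hq ⟨⟨z, w⟩, ⟨z', w'⟩⟩ hq' he
        simp only [coe_filter, mem_filter, mem_product, Set.mem_ofPred_eq, Prod.mk.injEq]
          at hq hq' he ⊢
        obtain ⟨⟨-, h5⟩, rfl, rfl⟩ := hq
        obtain ⟨⟨-, h5'⟩, rfl, rfl⟩ := hq'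
        have h6 := mul_left_cancel₀ ha0 he
        refine ⟨⟨rfl, h6⟩, rfl, mul_left_cancel₀ he0 (h5.symm.trans (he.trans h5'))⟩
    · rintro ⟨⟨x, y⟩, ⟨x', y'⟩⟩ hq
      simp only [coe_filter, mem_product, Set.mem_ofPred_eq] at hq
      simpa using ⟨hq.1.2.1, hq.1.1.1⟩
  have h1 : #(X * X) * ∑ e ∈ X, ∑ a ∈ X, #(a • X ∩ e • X) < #X * #X ^ 3 := by
    rw [mul_sum]
    calc _ < ∑ e ∈ X, #X ^ 3 := sum_lt_sum_of_nonempty hne hlt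
      _ = _ := by simp
  have h2 : (#X * #X) ^ 2 ≤ #(X * X) * ∑ e ∈ X, ∑ a ∈ X, #(a • X ∩ e • X) :=
    hcs.trans (by gcongr)
  nlinarith

/-- The sum-product estimate in polynomial form, for sets of nonzero elements. -/
theorem card_pow_thirteen_le {p : ℕ} [Fact p.Prime] {A : Finset (ZMod p)} (h0 : 0 ∉ A)
    (hA : A.Nonempty) (hAp : #A ^ 2 ≤ p) {M : ℝ} (hsum : (#(A + A) : ℝ) ≤ M)
    (hprod : (#(A * A) : ℝ) ≤ M) : (#A : ℝ) ^ 13 ≤ 2 ^ 49 * M ^ 12 := by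
  have hm : (0 : ℝ) < #A := by exact_mod_cast hA.card_pos
  have hmM : (#A : ℝ) ≤ M := le_trans (by exact_mod_cast card_le_card_add_right hA) hsum
  have hM₀ : 0 < M := hm.trans_le hmM
  obtain ⟨X, hXA, hX, hXsum⟩ := exists_large_subset_card_add_three_le hA
  have hXpos : (0 : ℝ) < #X := by linarith
  have hXne : X.Nonempty := card_pos.1 (by exact_mod_cast hXpos)
  have hX0 : 0 ∉ X := fun h ↦ h0 (hXA h)
  have hXle : (#X : ℝ) ≤ #A := by gcongr
  have hQ : (#(X + (X + X + X)) : ℝ) ≤ 64 * M ^ 3 / #A ^ 2 := by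
    calc (#(X + (X + X + X)) : ℝ) ≤ #(X + (A + A + A)) := by gcongr
      _ ≤ 64 * ((#(A + A) : ℝ) / #A) ^ 3 * #X := hXsum
      _ ≤ 64 * (M / #A) ^ 3 * #A := by gcongr
      _ = _ := by field_simp
  have hXM : (#(X + X) : ℝ) ≤ M := le_trans (by gcongr) hsum
  have hXXM : (#(X * X) : ℝ) ≤ M := le_trans (by gcongr) hprod
  obtain ⟨e, he, hsumX⟩ := exists_card_cube_le_sum_card_inter hX0 hXne
  set f : ZMod p → ℝ := fun a ↦ #(a • X ∩ e • X) with hf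
  have hf0 : ∀ a, 0 ≤ f a := fun a ↦ Nat.cast_nonneg _
  have hsumX' : (#X : ℝ) ^ 3 ≤ M * ∑ a ∈ X, f a := by
    calc (#X : ℝ) ^ 3 ≤ #(X * X) * ∑ a ∈ X, f a := by
          simp only [hf]
          exact_mod_cast hsumX
      _ ≤ _ := mul_le_mul_of_nonneg_right hXXM (sum_nonneg fun a _ ↦ hf0 a)
  have hfX : ∀ a, f a ≤ #A := fun a ↦ by
    refine le_trans ?_ hXle
    simp only [hf]
    exact_mod_cast (card_le_card inter_subset_left).trans card_image_le
  have hroot : ∀ x : ℝ, 0 ≤ x → ∃ y : ℝ, 0 ≤ y ∧ y ^ 4 = x := fun x hx ↦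
    ⟨x ^ ((1 : ℝ) / 4), by positivity, by
      rw [← Real.rpow_natCast, ← Real.rpow_mul hx]; norm_num⟩
  obtain ⟨T, hT, hT4⟩ := hroot (2 ^ 30 * M ^ 8 / #A ^ 2) (by positivity)
  obtain ⟨k, hk, hk4⟩ := hroot #X (by positivity)
  have hlevel : ∀ u ⊆ X, ∀ a ∈ u, (∀ x ∈ u, f a ≤ f x) → (#u : ℝ) ^ 3 * f a ^ 4 ≤ T ^ 4 := by
    intro u hu a ha hmin
    have hfa := hf0 a
    rw [hT4]
    rcases hfa.eq_or_lt with h | h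
    · rw [← h, zero_pow (by norm_num), mul_zero]
      positivity
    rcases le_or_gt (#u) 1 with hu1 | hu1
    · have hu1' : (#u : ℝ) ≤ 1 := by exact_mod_cast hu1
      rw [le_div_iff₀ (by positivity)]
      calc (#u : ℝ) ^ 3 * f a ^ 4 * #A ^ 2 ≤ 1 ^ 3 * M ^ 4 * M ^ 2 := by
            gcongr
            exact (hfX a).trans hmM
        _ = 1 * M ^ 6 := by ring
        _ ≤ 2 ^ 30 * M ^ 8 := by
            have h1 : (1 : ℝ) ≤ M := le_trans (by exact_mod_cast hA.card_pos) hmM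
            gcongr
            · norm_num
            · norm_num
    · have hup : #u ^ 2 ≤ p := le_trans (by gcongr; exact hu.trans hXA) hAp
      refine (card_cube_mul_pow_four_le hX0 h hXM hQ hu hmin hup hu1).trans_eq ?_
      ring
  have hweak := sum_pow_four_le_of_level_sets X f (fun a _ ↦ hf0 a) hT hlevel hk hk4
  have h1 : (#X : ℝ) ^ 3 ≤ M * (4 * T * k) := hsumX'.trans (by gcongr)
  have h2 : ((#X : ℝ) ^ 3) ^ 4 ≤ (M * (4 * T * k)) ^ 4 := by gcongr
  have h3 : (M * (4 * T * k)) ^ 4 = 2 ^ 38 * M ^ 12 / #A ^ 2 * #X := by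
    calc (M * (4 * T * k)) ^ 4 = 256 * M ^ 4 * T ^ 4 * k ^ 4 := by ring
      _ = _ := by rw [hT4, hk4]; ring
  have h4 : (#X : ℝ) ^ 11 ≤ 2 ^ 38 * M ^ 12 / #A ^ 2 := by
    refine le_of_mul_le_mul_right ?_ hXpos
    calc (#X : ℝ) ^ 11 * #X = (#X ^ 3) ^ 4 := by ring
      _ ≤ _ := h2.trans_eq h3
  rw [le_div_iff₀ (by positivity)] at h4
  calc (#A : ℝ) ^ 13 = #A ^ 11 * #A ^ 2 := by ring
    _ ≤ (2 * (#X : ℝ)) ^ 11 * (#A : ℝ) ^ 2 := by gcongr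
    _ = 2 ^ 11 * ((#X : ℝ) ^ 11 * #A ^ 2) := by ring
    _ ≤ 2 ^ 11 * (2 ^ 38 * M ^ 12) := by gcongr
    _ = _ := by ring

end SumProduct

theorem sum_product_small :
    ∃ c : ℝ, 0 < c ∧ ∀ (p : ℕ), p.Prime → ∀ A : Finset (ZMod p),
      2 ≤ A.card → (A.card : ℝ) ≤ Real.sqrt p →
      c * (A.card : ℝ) ^ ((13 : ℝ) / 12) ≤ max ((A + A).card : ℝ) ((A * A).card : ℝ) := by
  refine ⟨1 / 64, by norm_num, fun p hp A hA hAp ↦ ?_⟩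
  have : Fact p.Prime := ⟨hp⟩
  set M : ℝ := max ((A + A).card : ℝ) ((A * A).card : ℝ) with hM
  have hMnonneg : 0 ≤ M := by positivity
  have hAp' : #A ^ 2 ≤ p := by
    have := (Real.le_sqrt (by positivity) (by positivity)).1 hAp
    exact_mod_cast this
  have hcard : #A ≤ 2 * #(A.erase 0) := by
    have := pred_card_le_card_erase (a := (0 : ZMod p)) (s := A)
    omega
  have hcard' : (#A : ℝ) ≤ 2 * #(A.erase 0) := by exact_mod_cast hcard
  have hsub : A.erase 0 ⊆ A := erase_subset _ _
  have key : (#(A.erase 0) : ℝ) ^ 13 ≤ 2 ^ 49 * M ^ 12 := by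
    refine card_pow_thirteen_le (by simp) (card_pos.1 (by omega))
      (le_trans (by gcongr) hAp') (le_trans ?_ (le_max_left _ _)) (le_trans ?_ (le_max_right _ _))
    · gcongr
    · gcongr
  refine le_of_pow_le_pow_left₀ (n := 12) (by norm_num) hMnonneg ?_
  have hpow : ((#A : ℝ) ^ ((13 : ℝ) / 12)) ^ 12 = (#A : ℝ) ^ 13 := by
    rw [← Real.rpow_natCast, ← Real.rpow_mul (by positivity), ← Real.rpow_natCast]
    norm_num
  rw [mul_pow, hpow]
  calc (1 / 64 : ℝ) ^ 12 * (#A : ℝ) ^ 13 ≤ (1 / 64) ^ 12 * (2 * #(A.erase 0)) ^ 13 := by gcongr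
    _ = (1 / 64) ^ 12 * 2 ^ 13 * (#(A.erase 0) : ℝ) ^ 13 := by ring
    _ ≤ (1 / 64) ^ 12 * 2 ^ 13 * (2 ^ 49 * M ^ 12) := by gcongr
    _ = 1 / 1024 * M ^ 12 := by ring
    _ ≤ M ^ 12 := by
      have : 0 ≤ M ^ 12 := by positivity
      linarith
end

section
/- For every finite A ⊆ F_p with 2 ≤ |A| ≤ p^{1/2}, the inequality |A+A|⁸ · |AA|⁴ ≥ c|A|^{13} holds for an absolute constant c > 0. -/
open Finset Pointwise

section Pluennecke

variable {G : Type*} [AddCommGroup G] [DecidableEq G]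

lemma exists_nonempty_subset_card_add_nsmul_le {A B : Finset G} (hA : A.Nonempty) {α : ℝ}
    (hα : (#(A + B) : ℝ) ≤ α * #A) :
    ∃ X ⊆ A, X.Nonempty ∧ ∀ k : ℕ, (#(X + k • B) : ℝ) ≤ α ^ k * #X := by
  obtain ⟨X, hX, hmin⟩ := exists_min_image (A.powerset.erase ∅)
    (fun X ↦ (#(X + B) : ℝ) / #X)
    ⟨A, mem_erase_of_ne_of_mem hA.ne_empty (mem_powerset_self _)⟩
  have hXA : X ⊆ A := mem_powerset.1 (mem_of_mem_erase hX)
  have hXn : X.Nonempty := nonempty_iff_ne_empty.2 (ne_of_mem_erase hX)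
  have hX0 : (0 : ℝ) < #X := by exact_mod_cast hXn.card_pos
  have hA0 : (0 : ℝ) < #A := by exact_mod_cast hA.card_pos
  have hXα : (#(X + B) : ℝ) ≤ α * #X := by
    have h := hmin A (mem_erase_of_ne_of_mem hA.ne_empty (mem_powerset_self _))
    rw [← div_le_iff₀ hX0]
    exact h.trans ((div_le_iff₀ hA0).2 hα)
  have hα0 : 0 ≤ α := by
    by_contra! h
    nlinarith [(Nat.cast_nonneg #(A + B) : (0 : ℝ) ≤ _)]
  have hpet : ∀ A' ⊆ X, #(X + B) * #A' ≤ #(A' + B) * #X := by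
    intro A' hA'
    obtain rfl | hn := A'.eq_empty_or_nonempty
    · simp
    have h := hmin A' (mem_erase_of_ne_of_mem hn.ne_empty (mem_powerset.2 (hA'.trans hXA)))
    rw [div_le_div_iff₀ hX0 (by exact_mod_cast hn.card_pos)] at h
    exact_mod_cast h
  refine ⟨X, hXA, hXn, fun k ↦ ?_⟩
  induction k with
  | zero => simp
  | succ k ih =>
    have h : (#(k • B + X + B) : ℝ) * #X ≤ #(X + B) * #(k • B + X) := by
      exact_mod_cast pluennecke_petridis_inequality_add (k • B) hpet
    have he : X + (k + 1) • B = k • B + X + B := by rw [succ_nsmul]; abel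
    rw [he]
    rw [add_comm X] at ih
    refine le_of_mul_le_mul_right (h.trans ?_) hX0
    calc (#(X + B) : ℝ) * #(k • B + X) ≤ (α * #X) * (α ^ k * #X) := by gcongr
      _ = α ^ (k + 1) * #X * #X := by ring

/-- **Plünnecke's inequality** for a subset containing at least half of the elements. -/
lemma exists_large_subset_card_add_nsmul_le {A B : Finset G} (hA : A.Nonempty) {α : ℝ}
    (hα : (#(A + B) : ℝ) ≤ α * #A) (k : ℕ) :
    ∃ X ⊆ A, #A ≤ 2 * #X ∧ (#(X + k • B) : ℝ) ≤ (2 * α) ^ k * #X := by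
  obtain ⟨X, hX, hmax⟩ := exists_max_image
    {X ∈ A.powerset | (#(X + k • B) : ℝ) ≤ (2 * α) ^ k * #X} card ⟨∅, by simp⟩
  simp only [mem_filter, mem_powerset] at hX hmax
  refine ⟨X, hX.1, ?_, hX.2⟩
  by_contra! hlt
  have hcard : #(A \ X) + #X = #A := card_sdiff_add_card_eq_card hX.1
  have hZ : (A \ X).Nonempty := card_pos.1 (by lia)
  have hA0 : (0 : ℝ) < #A := by exact_mod_cast hA.card_pos
  have hα0 : 0 ≤ α := by
    by_contra! h
    nlinarith [(Nat.cast_nonneg #(A + B) : (0 : ℝ) ≤ _)]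
  have hZα : (#(A \ X + B) : ℝ) ≤ 2 * α * #(A \ X) := by
    have h1 : (#(A \ X + B) : ℝ) ≤ #(A + B) := by
      exact_mod_cast card_le_card (add_subset_add_right sdiff_subset)
    have h2 : (#A : ℝ) ≤ 2 * #(A \ X) := by
      have : #A ≤ 2 * #(A \ X) := by lia
      exact_mod_cast this
    nlinarith
  obtain ⟨Y, hY, hYn, hYk⟩ := exists_nonempty_subset_card_add_nsmul_le hZ hZα
  have hdisj : Disjoint X Y := disjoint_of_subset_right hY disjoint_sdiff
  have hXY : #(X ∪ Y) = #X + #Y := card_union_of_disjoint hdisj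
  have := hmax (X ∪ Y) ⟨union_subset hX.1 (hY.trans sdiff_subset), by
    rw [hXY, union_add]
    calc (#((X + k • B) ∪ (Y + k • B)) : ℝ) ≤ #(X + k • B) + #(Y + k • B) := by
          exact_mod_cast card_union_le _ _
      _ ≤ (2 * α) ^ k * #X + (2 * α) ^ k * #Y := add_le_add hX.2 (hYk k)
      _ = _ := by push_cast; ring⟩
  have := hYn.card_pos
  lia

/-- **Plünnecke's inequality** with two different summands, for a large subset. -/
lemma exists_large_subset_card_add_add_mul_card_le {A B C : Finset G} (hA : A.Nonempty)
    (hB : B.Nonempty) (hC : C.Nonempty) :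
    ∃ X ⊆ A, #A ≤ 2 * #X ∧ #(X + B + C) * #A ≤ 16 * (#(A + B) * #(A + C)) := by
  set u := #(A + B) with hu
  set v := #(A + C) with hv
  have hu0 : 0 < u := (hA.add hB).card_pos
  have hv0 : 0 < v := (hA.add hC).card_pos
  have : NeZero u := ⟨hu0.ne'⟩
  have : NeZero v := ⟨hv0.ne'⟩
  let D : Finset (G × ZMod v × ZMod u) :=
    B ×ˢ (univ : Finset (ZMod v)) ×ˢ ({0} : Finset (ZMod u)) ∪
      C ×ˢ ({0} : Finset (ZMod v)) ×ˢ (univ : Finset (ZMod u))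
  let E (X : Finset G) : Finset (G × ZMod v × ZMod u) := X ×ˢ {(0, 0)}
  have hE : ∀ X, #(E X) = #X := fun X ↦ by simp [E]
  have hA0 : (0 : ℝ) < #A := by exact_mod_cast hA.card_pos
  have hED : (#(E A + D) : ℝ) ≤ (2 * u * v / #A) * #(E A) := by
    rw [hE, div_mul_cancel₀ _ hA0.ne']
    have hsub : E A + D ⊆ (A + B) ×ˢ (univ : Finset (ZMod v)) ×ˢ ({0} : Finset (ZMod u)) ∪
        (A + C) ×ˢ ({0} : Finset (ZMod v)) ×ˢ (univ : Finset (ZMod u)) := by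
      rintro ⟨x, y, z⟩ h
      obtain ⟨⟨a, a1, a2⟩, ha, ⟨b, b1, b2⟩, hb, hab⟩ := mem_add.1 h
      simp only [E, D, mem_union, mem_product, mem_singleton, mem_univ, Prod.mk.injEq,
        true_and, and_true, Prod.mk_add_mk] at ha hb hab ⊢
      obtain ⟨ha, rfl, rfl⟩ := ha
      obtain ⟨rfl, rfl, rfl⟩ := hab
      rcases hb with ⟨hb, rfl⟩ | ⟨hb, rfl⟩
      · exact Or.inl ⟨add_mem_add ha hb, by simp⟩
      · exact Or.inr ⟨add_mem_add ha hb, by simp⟩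
    have h := (card_le_card hsub).trans (card_union_le _ _)
    simp only [card_product, card_singleton, card_univ, ZMod.card, mul_one, one_mul] at h
    rw [← hu, ← hv] at h
    have h' : #(E A + D) ≤ 2 * u * v := by linarith
    exact_mod_cast h'
  obtain ⟨Y, hYA, hYc, hY⟩ := exists_large_subset_card_add_nsmul_le
    (card_pos.1 (by rw [hE]; exact hA.card_pos) : (E A).Nonempty) hED 2
  obtain ⟨X, hXA, rfl⟩ : ∃ X ⊆ A, Y = E X := by
    refine ⟨Y.image Prod.fst, ?_, ?_⟩
    · intro x hx
      obtain ⟨y, hy, rfl⟩ := mem_image.1 hx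
      exact (mem_product.1 (hYA hy)).1
    · ext ⟨x, y⟩
      simp only [E, mem_product, mem_image, mem_singleton]
      constructor
      · intro h
        exact ⟨⟨_, h, rfl⟩, mem_singleton.1 (mem_product.1 (hYA h)).2⟩
      · rintro ⟨⟨⟨x', y'⟩, h, rfl⟩, rfl⟩
        have h2 : y' = (0, 0) := mem_singleton.1 (mem_product.1 (hYA h)).2
        rwa [h2] at h
  rw [hE, hE] at hYc
  refine ⟨X, hXA, hYc, ?_⟩
  have hsub : (X + B + C) ×ˢ ((univ : Finset (ZMod v)) ×ˢ (univ : Finset (ZMod u))) ⊆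
      E X + 2 • D := by
    rintro ⟨x, y, z⟩ h
    obtain ⟨w, hw, c, hc, rfl⟩ := mem_add.1 (mem_product.1 h).1
    obtain ⟨a, ha, b, hb, rfl⟩ := mem_add.1 hw
    rw [two_nsmul]
    refine mem_add.2 ⟨(a, 0, 0), by simp [E, ha], (b, y, 0) + (c, 0, z),
      add_mem_add (by simp [D, hb]) (by simp [D, hc]), by simp [add_assoc]⟩
  have h1 := card_le_card hsub
  simp only [card_product, card_univ, ZMod.card] at h1
  have h2 : (#(X + B + C) : ℝ) * (v * u) ≤ (2 * (2 * u * v / #A)) ^ 2 * #X := by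
    rw [hE] at hY
    exact le_trans (by exact_mod_cast h1) hY
  have hXA' : (#X : ℝ) ≤ #A := by exact_mod_cast card_le_card hXA
  have hu' : (0 : ℝ) < u := by exact_mod_cast hu0
  have hv' : (0 : ℝ) < v := by exact_mod_cast hv0
  have h3 : (#(X + B + C) : ℝ) * #A ≤ 16 * (u * v) := by
    refine le_of_mul_le_mul_right ?_ (mul_pos hv' hu')
    calc (#(X + B + C) : ℝ) * #A * (v * u) = #(X + B + C) * (v * u) * #A := by ring
      _ ≤ (2 * (2 * u * v / #A)) ^ 2 * #A * #A := 
          mul_le_mul_of_nonneg_right (h2.trans (by gcongr)) hA0.le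
      _ = 16 * (u * v) * (v * u) := by field_simp; ring
  exact_mod_cast h3

end Pluennecke

section Field

variable {F : Type*} [Field F] [DecidableEq F]

lemma card_smul_add_inter_le_s10 {X B : Finset F} (hX : X ⊆ B) (a b : F) :
    #(a • X + (a • B ∩ b • B)) ≤ #(B + B) :=
  calc #(a • X + (a • B ∩ b • B)) ≤ #(a • B + a • B) :=
        card_le_card (add_subset_add (smul_finset_subset_smul_finset hX) inter_subset_left)
    _ = #(a • (B + B)) := by rw [smul_add]
    _ ≤ #(B + B) := card_smul_finset_le

lemma card_smul_add_mul_le {X B : Finset F} (hX : X ⊆ B) {a b : F} {t : ℕ}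
    (ht : t ≤ #(a • B ∩ b • B)) (V : Finset F) :
    #(a • X + V) * t ≤ #(B + B) * #(b • B + V) :=
  calc #(a • X + V) * t ≤ #(a • X + V) * #(a • B ∩ b • B) := by gcongr
    _ ≤ #(a • X + (a • B ∩ b • B)) * #((a • B ∩ b • B) + V) :=
        ruzsa_triangle_inequality_add_add_add _ _ _
    _ ≤ #(B + B) * #(b • B + V) :=
        Nat.mul_le_mul (card_smul_add_inter_le_s10 hX a b)
          (card_le_card (add_subset_add_right inter_subset_right))

lemma card_smul_sub_mul_le {X B : Finset F} (hX : X ⊆ B) {a b : F} {t : ℕ}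
    (ht : t ≤ #(a • B ∩ b • B)) (V : Finset F) :
    #(a • X - V) * t ≤ #(B + B) * #(b • B + V) :=
  calc #(a • X - V) * t ≤ #(a • X - V) * #(a • B ∩ b • B) := by gcongr
    _ ≤ #(a • X + (a • B ∩ b • B)) * #(V + (a • B ∩ b • B)) :=
        ruzsa_triangle_inequality_sub_add_add _ _ _
    _ ≤ #(B + B) * #(b • B + V) := by
        rw [add_comm V]
        exact Nat.mul_le_mul (card_smul_add_inter_le_s10 hX a b)
          (card_le_card (add_subset_add_right inter_subset_right))

/-- A combination of four dilates of `X`, each meeting the dilate `e • B` in many points,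
is controlled by the fourfold sumset of `B`. -/
lemma card_smul_sub_smul_add_smul_sub_smul_mul_le {X B : Finset F} (hX : X ⊆ B)
    {a b c d e : F} {t : ℕ} (ha : t ≤ #(a • B ∩ e • B)) (hb : t ≤ #(b • B ∩ e • B))
    (hc : t ≤ #(c • B ∩ e • B)) (hd : t ≤ #(d • B ∩ e • B)) :
    #((a • X - b • X) + (c • X - d • X)) * t ^ 4 ≤ #(B + B) ^ 4 * #(B + (B + B + B)) := by
  set P := e • B with hP
  have h1 := card_smul_sub_mul_le hX ha (b • X + (d • X - c • X))
  have h2 := card_smul_add_mul_le hX hb (d • X - c • X + P)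
  have h3 := card_smul_add_mul_le hX hd (P + P - c • X)
  have h4 := card_smul_sub_mul_le hX hc (P + P + P)
  have e1 : (a • X - b • X) + (c • X - d • X) = a • X - (b • X + (d • X - c • X)) := by
    simp only [sub_eq_add_neg, neg_add, neg_neg]
    ac_rfl
  have e2 : P + (b • X + (d • X - c • X)) = b • X + (d • X - c • X + P) := by
    ac_rfl
  have e3 : P + (d • X - c • X + P) = d • X + (P + P - c • X) := by
    simp only [sub_eq_add_neg]
    ac_rfl
  have e4 : #(P + (P + P - c • X)) = #(c • X - (P + P + P)) := by
    rw [← card_neg]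
    congr 1
    simp only [sub_eq_add_neg, neg_add, neg_neg]
    ac_rfl
  have e5 : #(P + (P + P + P)) ≤ #(B + (B + B + B)) := by
    rw [hP, ← smul_add, ← smul_add, ← smul_add]
    exact card_smul_finset_le
  rw [e2] at h1
  rw [e3] at h2
  rw [e4] at h3
  rw [e1]
  set S := #(B + B)
  calc _ = #(a • X - (b • X + (d • X - c • X))) * t * t ^ 3 := by ring
    _ ≤ _ * t ^ 3 := Nat.mul_le_mul_right _ h1
    _ = S * (#(b • X + (d • X - c • X + P)) * t) * t ^ 2 := by ring
    _ ≤ S * _ * t ^ 2 := Nat.mul_le_mul_right _ (Nat.mul_le_mul_left _ h2)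
    _ = S ^ 2 * (#(d • X + (P + P - c • X)) * t) * t := by ring
    _ ≤ S ^ 2 * _ * t := Nat.mul_le_mul_right _ (Nat.mul_le_mul_left _ h3)
    _ = S ^ 3 * (_ * t) := by ring
    _ ≤ S ^ 3 * _ := Nat.mul_le_mul_left _ h4
    _ = S ^ 4 * #(P + (P + P + P)) := by ring
    _ ≤ _ := Nat.mul_le_mul_left _ e5

lemma exists_card_sq_le_two_mul_card_add_smul [Fintype F] {X : Finset F}
    (hX : #X ^ 2 ≤ Fintype.card F) : ∃ r : F, #X ^ 2 ≤ 2 * #(X + r • X) := by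
  let Q (r : F) : Finset ((F × F) × F × F) :=
    {q ∈ (X ×ˢ X) ×ˢ X ×ˢ X | q.1.1 + r * q.1.2 = q.2.1 + r * q.2.2}
  have hsum : ∑ r : F, #(Q r) ≤ ∑ _r : F, 2 * #X ^ 2 := by
    have hq : ∀ q : (F × F) × F × F,
        #{r : F | q.1.1 + r * q.1.2 = q.2.1 + r * q.2.2} ≤
          1 + if q.1 = q.2 then Fintype.card F else 0 := by
      rintro ⟨⟨x, y⟩, x', y'⟩
      split_ifs with h
      · exact (card_le_univ _).trans (by lia)
      · refine card_le_one.2 fun r hr s hs ↦ ?_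
        simp only [mem_filter, mem_univ, true_and] at hr hs
        by_contra hrs
        have hy : y = y' := by
          have : (r - s) * (y - y') = 0 := by linear_combination hr - hs
          rcases mul_eq_zero.1 this with h | h
          · exact absurd (sub_eq_zero.1 h) hrs
          · exact sub_eq_zero.1 h
        subst hy
        exact h (by simp only [Prod.mk.injEq, and_true]; exact add_right_cancel hr)
    calc ∑ r : F, #(Q r)
        = ∑ q ∈ (X ×ˢ X) ×ˢ X ×ˢ X,
            #{r : F | q.1.1 + r * q.1.2 = q.2.1 + r * q.2.2} := by
          simp only [Q, card_filter]
          exact sum_comm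
      _ ≤ ∑ q ∈ (X ×ˢ X) ×ˢ X ×ˢ X, (1 + if q.1 = q.2 then Fintype.card F else 0) :=
          sum_le_sum fun q _ ↦ hq q
      _ = #X ^ 4 + #X ^ 2 * Fintype.card F := by
          have h : ∑ q ∈ (X ×ˢ X) ×ˢ X ×ˢ X, (if q.1 = q.2 then Fintype.card F else 0) =
              #X ^ 2 * Fintype.card F := by
            rw [sum_product, sum_congr rfl fun x hx ↦
              (sum_ite_eq (X ×ˢ X) x fun _ ↦ Fintype.card F).trans (if_pos hx)]
            simp [sq]
          rw [sum_add_distrib, h]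
          simp only [sum_const, card_product, smul_eq_mul]
          ring
      _ ≤ ∑ _r : F, 2 * #X ^ 2 := by
          rw [sum_const, card_univ, smul_eq_mul]
          nlinarith
  obtain ⟨r, -, hr⟩ := exists_le_of_sum_le univ_nonempty hsum
  refine ⟨r, ?_⟩
  let f (q : F × F) : F := q.1 + r * q.2
  have hmaps : Set.MapsTo f (X ×ˢ X : Finset (F × F)) (X + r • X : Finset F) := by
    rintro ⟨x, y⟩ h
    have h := mem_product.1 h
    exact add_mem_add h.1 (smul_mem_smul_finset h.2)
  have hQ : ∑ b ∈ X + r • X, #{q ∈ X ×ˢ X | f q = b} ^ 2 = #(Q r) := by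
    have hmaps' : Set.MapsTo (fun q : (F × F) × F × F ↦ f q.1) (Q r) (X + r • X : Finset F) :=
      fun q hq ↦ hmaps (mem_product.1 (mem_filter.1 hq).1).1
    rw [card_eq_sum_card_fiberwise hmaps']
    refine sum_congr rfl fun b _ ↦ ?_
    rw [sq, ← card_product]
    congr 1
    ext ⟨q, q'⟩
    simp only [Q, f, mem_filter, mem_product]
    constructor
    · rintro ⟨⟨h1, h2⟩, h3, h4⟩
      exact ⟨⟨⟨h1, h3⟩, h2.trans h4.symm⟩, h2⟩
    · rintro ⟨⟨⟨h1, h3⟩, h4⟩, h2⟩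
      exact ⟨⟨h1, h2⟩, h3, h4.symm.trans h2⟩
  have hcs := sq_sum_le_card_mul_sum_sq (s := X + r • X) (f := fun b ↦ #{q ∈ X ×ˢ X | f q = b})
  rw [← card_eq_sum_card_fiberwise hmaps, hQ, card_product] at hcs
  obtain h0 | h0 := Nat.eq_zero_or_pos #X
  · simp [h0]
  · refine Nat.le_of_mul_le_mul_right ?_ (pow_pos h0 2)
    calc #X ^ 2 * #X ^ 2 = (#X * #X) ^ 2 := by ring
      _ ≤ #(X + r • X) * #(Q r) := hcs
      _ ≤ #(X + r • X) * (2 * #X ^ 2) := by gcongr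
      _ = _ := by ring

lemma card_add_smul_eq_mul {X Y : Finset F} {s : F}
    (hs : ∀ a ∈ X, ∀ b ∈ X, ∀ c ∈ Y, ∀ d ∈ Y, c ≠ d → s ≠ (a - b) / (c - d)) :
    #(X + s • Y) = #X * #Y := by
  have himage : X + s • Y = (X ×ˢ Y).image fun q ↦ q.1 + s * q.2 := by
    ext z
    simp only [mem_add, mem_smul_finset, mem_image, mem_product, Prod.exists, smul_eq_mul]
    constructor
    · rintro ⟨x, hx, _, ⟨y, hy, rfl⟩, rfl⟩
      exact ⟨x, y, ⟨hx, hy⟩, rfl⟩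
    · rintro ⟨x, y, ⟨hx, hy⟩, rfl⟩
      exact ⟨x, hx, _, ⟨y, hy, rfl⟩, rfl⟩
  rw [himage, ← card_product]
  refine card_image_of_injOn ?_
  rintro ⟨x, y⟩ h ⟨x', y'⟩ h' heq
  have h := mem_product.1 h
  have h' := mem_product.1 h'
  simp only at heq h h'
  have hy : y = y' := by
    by_contra hne
    refine hs x' h'.1 x h.1 y h.2 y' h'.2 hne ?_
    rw [eq_div_iff (sub_ne_zero.2 hne)]
    linear_combination heq
  subst hy
  rw [add_right_cancel heq]

end Field

/-- The ratios of differences of elements of `X` either yield a dilate `r • X` with `X + r • X`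
large, or are not stable under adding `1`. -/
lemma exists_ratio_expanding {p : ℕ} [Fact p.Prime] {X : Finset (ZMod p)} (hX : 2 ≤ #X)
    (hXp : #X ^ 2 ≤ p) :
    ∃ a ∈ X, ∃ b ∈ X, ∃ c ∈ X, ∃ d ∈ X, c ≠ d ∧
      (#X ^ 2 ≤ 2 * #(X + ((a - b) / (c - d)) • X) ∨
        ∀ Y ⊆ X, #(Y + ((a - b) / (c - d) + 1) • X) = #Y * #X) := by
  by_contra! H
  have hR : ∀ r : ZMod p, ∃ a ∈ X, ∃ b ∈ X, ∃ c ∈ X, ∃ d ∈ X, c ≠ d ∧ r = (a - b) / (c - d) := by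
    intro r
    rw [← ZMod.natCast_zmod_val r]
    induction r.val with
    | zero =>
      obtain ⟨c, hc, d, hd, hcd⟩ := one_lt_card.1 hX
      exact ⟨c, hc, c, hc, c, hc, d, hd, hcd, by simp⟩
    | succ n ih =>
      obtain ⟨a, ha, b, hb, c, hc, d, hd, hcd, hn⟩ := ih
      obtain ⟨Y, hY, hne⟩ := (H a ha b hb c hc d hd hcd).2
      by_contra! hcon
      refine hne (card_add_smul_eq_mul fun a' ha' b' hb' c' hc' d' hd' hcd' ↦ ?_)
      rw [← hn]
      have := hcon a' (hY ha') b' (hY hb') c' hc' d' hd' hcd'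
      push_cast at this
      exact this
  obtain ⟨r, hr⟩ := exists_card_sq_le_two_mul_card_add_smul (X := X) (by rwa [ZMod.card])
  obtain ⟨a, ha, b, hb, c, hc, d, hd, hcd, rfl⟩ := hR r
  exact absurd hr (not_le.2 (H a ha b hb c hc d hd hcd).1)

lemma card_add_div_smul_le {F : Type*} [Field F] [DecidableEq F] {X : Finset F} {a b c d : F}
    (hcd : c ≠ d) :
    #(X + ((a - b) / (c - d)) • X) ≤ #((a • X - b • X) + (c • X - d • X)) := by
  have hsub : ∀ u v : F, (u - v) • X ⊆ u • X - v • X := by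
    intro u v x hx
    obtain ⟨y, hy, rfl⟩ := mem_smul_finset.1 hx
    rw [sub_smul]
    exact sub_mem_sub (smul_mem_smul_finset hy) (smul_mem_smul_finset hy)
  have hne : c - d ≠ 0 := sub_ne_zero.2 hcd
  have h : X + ((a - b) / (c - d)) • X = (c - d)⁻¹ • ((a - b) • X + (c - d) • X) := by
    rw [smul_add, smul_smul, smul_smul, inv_mul_cancel₀ hne, one_smul, add_comm, div_eq_inv_mul]
  rw [h]
  exact card_smul_finset_le.trans (card_le_card (add_subset_add (hsub _ _) (hsub _ _)))

/-- If every dilate of `B` by an element of `X` meets `e • B` in at least `t` points, then `X`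
is small unless `B + B` is large. -/
lemma card_pow_mul_pow_mul_card_sq_le {p : ℕ} [Fact p.Prime] {B X : Finset (ZMod p)}
    (hXB : X ⊆ B) (hBp : #B ^ 2 ≤ p) {e : ZMod p} {t S K : ℕ}
    (hX : ∀ a ∈ X, t ≤ #(a • B ∩ e • B)) (hS : #(B + B) ≤ S) (hBS : #B ≤ S)
    (hK : 1 ≤ K) (hB : #(B + (B + B + B)) * #B ^ 2 ≤ K * S ^ 3) :
    #X ^ 3 * t ^ 4 * #B ^ 2 ≤ 32 * K * S ^ 8 := by
  have hXB' : #X ≤ #B := card_le_card hXB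
  obtain rfl | ⟨x, hx⟩ := X.eq_empty_or_nonempty
  · simp
  have hX1 : 0 < #X := card_pos.2 ⟨x, hx⟩
  have htB : t ≤ #B := (hX x hx).trans ((card_le_card inter_subset_left).trans card_smul_finset_le)
  obtain hX2 | hX2 := Nat.lt_or_ge #X 2
  · have h1 : #X = 1 := by lia
    have hS0 : 1 ≤ S := by lia
    rw [h1]
    calc 1 ^ 3 * t ^ 4 * #B ^ 2 ≤ 1 ^ 3 * S ^ 4 * S ^ 2 := by gcongr; exact htB.trans hBS
      _ = 1 * 1 * S ^ 6 := by ring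
      _ ≤ 32 * K * S ^ 8 := by gcongr <;> lia
  obtain ⟨a, ha, b, hb, c, hc, d, hd, hcd, h⟩ :=
    exists_ratio_expanding hX2 ((Nat.pow_le_pow_left hXB' 2).trans hBp)
  set r := (a - b) / (c - d) with hr
  set D := #(X + r • X)
  have hD : D * t ^ 4 * #B ^ 2 ≤ K * S ^ 7 :=
    calc D * t ^ 4 * #B ^ 2
        ≤ #((a • X - b • X) + (c • X - d • X)) * t ^ 4 * #B ^ 2 := by
          gcongr
          exact card_add_div_smul_le hcd
      _ ≤ #(B + B) ^ 4 * #(B + (B + B + B)) * #B ^ 2 := Nat.mul_le_mul_right _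
          (card_smul_sub_smul_add_smul_sub_smul_mul_le hXB (hX a ha) (hX b hb) (hX c hc) (hX d hd))
      _ ≤ S ^ 4 * #(B + (B + B + B)) * #B ^ 2 := by gcongr
      _ = S ^ 4 * (#(B + (B + B + B)) * #B ^ 2) := by ring
      _ ≤ S ^ 4 * (K * S ^ 3) := by gcongr
      _ = K * S ^ 7 := by ring
  have hXD : #X ^ 3 ≤ 32 * S * D := by
    rcases h with h | h
    · calc #X ^ 3 = #X * #X ^ 2 := by ring
        _ ≤ S * (2 * D) := Nat.mul_le_mul (hXB'.trans hBS) h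
        _ ≤ 32 * S * D := by nlinarith [Nat.zero_le (S * D)]
    · have hXn : X.Nonempty := ⟨x, hx⟩
      obtain ⟨Y, hYX, hYc, hY⟩ := exists_large_subset_card_add_add_mul_card_le hXn hXn
        (hXn.smul_finset (a := r))
      have hsub : #(Y + (r + 1) • X) ≤ #(Y + X + r • X) := by
        refine card_le_card ?_
        rw [add_assoc, add_comm r]
        refine add_subset_add_left ?_
        intro z hz
        obtain ⟨y, hy, rfl⟩ := mem_smul_finset.1 hz
        rw [add_smul, one_smul]
        exact add_mem_add hy (smul_mem_smul_finset hy)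
      rw [h Y hYX] at hsub
      have hXX : #(X + X) ≤ S := (card_le_card (add_subset_add hXB hXB)).trans hS
      calc #X ^ 3 = #X * #X * #X := by ring
        _ ≤ 2 * #Y * #X * #X := by gcongr
        _ = 2 * ((#Y * #X) * #X) := by ring
        _ ≤ 2 * (#(Y + X + r • X) * #X) := by gcongr
        _ ≤ 2 * (16 * (#(X + X) * D)) := by gcongr
        _ ≤ 2 * (16 * (S * D)) := by gcongr
        _ = 32 * S * D := by ring
  calc #X ^ 3 * t ^ 4 * #B ^ 2 ≤ 32 * S * D * t ^ 4 * #B ^ 2 := by gcongr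
    _ = 32 * S * (D * t ^ 4 * #B ^ 2) := by ring
    _ ≤ 32 * S * (K * S ^ 7) := by gcongr
    _ = 32 * K * S ^ 8 := by ring

lemma sum_Ioc_pow_three_mul_le {f : ℕ → ℝ} (hf : ∀ t, 0 ≤ f t) {Y : ℝ} (hY : 0 ≤ Y)
    (h : ∀ t : ℕ, f t ^ 3 * (t : ℝ) ^ 4 ≤ Y) {T : ℕ} (hT : 0 < T) (n : ℕ) :
    (∑ t ∈ Ioc T n, f t) ^ 3 * T ≤ 27 * Y := by
  obtain ⟨Z, hZ0, hZ⟩ : ∃ Z : ℝ, 0 ≤ Z ∧ Z ^ 3 = Y :=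
    ⟨Y ^ ((3 : ℕ) : ℝ)⁻¹, by positivity, Real.rpow_inv_natCast_pow hY (by simp)⟩
  obtain ⟨u, hu0, hu⟩ : ∃ u : ℕ → ℝ, (∀ t, 0 ≤ u t) ∧ ∀ t, u t ^ 3 = t :=
    ⟨fun t ↦ (t : ℝ) ^ ((3 : ℕ) : ℝ)⁻¹, fun t ↦ by positivity,
      fun t ↦ Real.rpow_inv_natCast_pow t.cast_nonneg (by simp)⟩
  have hupos : ∀ t, 0 < t → 0 < u t := by
    intro t ht
    refine (hu0 t).lt_of_ne fun h0 ↦ ?_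
    have ht' : (0 : ℝ) < t := by exact_mod_cast ht
    rw [← hu, ← h0] at ht'
    norm_num at ht'
  have hfu : ∀ t, f t * u t ^ 4 ≤ Z := by
    intro t
    refine le_of_pow_le_pow_left₀ (n := 3) (by norm_num) hZ0 ?_
    calc (f t * u t ^ 4) ^ 3 = f t ^ 3 * (u t ^ 3) ^ 4 := by ring
      _ ≤ Z ^ 3 := by rw [hu, hZ]; exact h t
  have hsum : ∀ n, T ≤ n → ∑ t ∈ Ioc T n, f t ≤ 3 * Z * (1 / u T - 1 / u n) := by
    intro n hn
    induction n, hn using Nat.le_induction with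
    | base => simp
    | succ n hn ih =>
      rw [sum_Ioc_succ_top (by lia)]
      have hx := hupos (n + 1) (by lia)
      have hy := hupos n (by lia)
      have hcube : u (n + 1) ^ 3 - u n ^ 3 = 1 := by rw [hu, hu]; push_cast; ring
      have hle : u n ≤ u (n + 1) := by
        refine le_of_pow_le_pow_left₀ (n := 3) (by norm_num) hx.le ?_
        linarith
      have hstep : 1 / u (n + 1) ^ 4 ≤ 3 * (1 / u n - 1 / u (n + 1)) := by
        generalize u (n + 1) = x at *
        generalize u n = y at *
        rw [div_sub_div _ _ hy.ne' hx.ne', mul_div_assoc', div_le_div_iff₀ (by positivity)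
          (by positivity)]
        have h1 : y * x * (x ^ 2 + x * y + y ^ 2) ≤ x * x * (x ^ 2 + x * x + x ^ 2) := by gcongr
        have h2 : 0 ≤ x - y := by linarith
        calc (1 * (y * x) : ℝ) = (x - y) * (y * x * (x ^ 2 + x * y + y ^ 2)) := by
              linear_combination -(y * x) * hcube
          _ ≤ (x - y) * (x * x * (x ^ 2 + x * x + x ^ 2)) := mul_le_mul_of_nonneg_left h1 h2
          _ = 3 * (1 * x - y * 1) * x ^ 4 := by ring
      have hfn : f (n + 1) ≤ Z * (1 / u (n + 1) ^ 4) := by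
        rw [mul_one_div, le_div_iff₀ (by positivity)]
        exact hfu _
      nlinarith [mul_le_mul_of_nonneg_left hstep hZ0]
  have hS0 : 0 ≤ ∑ t ∈ Ioc T n, f t := sum_nonneg fun t _ ↦ hf t
  have hS : (∑ t ∈ Ioc T n, f t) * u T ≤ 3 * Z := by
    obtain hn | hn := le_total n T
    · rw [Ioc_eq_empty (by lia)]
      simpa using hZ0
    · rw [← le_div_iff₀ (hupos T hT)]
      refine (hsum n hn).trans ?_
      rw [← mul_one_div (3 * Z)]
      have : 0 ≤ 1 / u n := one_div_nonneg.2 (hu0 n)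
      exact mul_le_mul_of_nonneg_left (by linarith) (by positivity)
  calc (∑ t ∈ Ioc T n, f t) ^ 3 * T = ((∑ t ∈ Ioc T n, f t) * u T) ^ 3 := by rw [mul_pow, hu]
    _ ≤ (3 * Z) ^ 3 := by gcongr; exact mul_nonneg hS0 (hu0 T)
    _ = 27 * Y := by rw [mul_pow, hZ]; norm_num

lemma exists_card_pow_three_le_sum_card_inter {F : Type*} [Field F] [DecidableEq F]
    {B : Finset F} (hB : B.Nonempty) (h0 : 0 ∉ B) :
    ∃ e ∈ B, #B ^ 3 ≤ #(B * B) * ∑ a ∈ B, #(a • B ∩ e • B) := by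
  have hE : mulEnergy B B ≤ ∑ e ∈ B, ∑ a ∈ B, #(a • B ∩ e • B) := by
    rw [← sum_product']
    have hmaps : Set.MapsTo (fun q : (F × F) × F × F ↦ (q.1.2, q.1.1))
        (({x ∈ (B ×ˢ B) ×ˢ B ×ˢ B | x.1.1 * x.2.1 = x.1.2 * x.2.2} : Finset _) : Set _)
        (B ×ˢ B : Finset (F × F)) := by
      intro q hq
      simp only [coe_filter, mem_product, Set.mem_ofPred_eq] at hq
      simp [hq.1.1.1, hq.1.1.2]
    rw [mulEnergy, card_eq_sum_card_fiberwise hmaps]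
    refine sum_le_sum ?_
    rintro ⟨e, a⟩ hea
    have hea := mem_product.1 hea
    refine card_le_card_of_injOn (fun q ↦ a * q.2.1) ?_ ?_
    · rintro ⟨⟨x, y⟩, z, w⟩ hq
      simp only [coe_filter, mem_filter, mem_product, Set.mem_ofPred_eq, Prod.mk.injEq] at hq
      obtain ⟨⟨⟨-, hz, hw⟩, hzw⟩, rfl, rfl⟩ := hq
      simp only [coe_inter, Set.mem_inter_iff, mem_coe]
      refine ⟨smul_mem_smul_finset hz, ?_⟩
      rw [hzw]
      exact smul_mem_smul_finset hw
    · rintro ⟨⟨x, y⟩, z, w⟩ hq ⟨⟨x', y'⟩, z', w'⟩ hq' heq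
      simp only [coe_filter, mem_filter, mem_product, Set.mem_ofPred_eq, Prod.mk.injEq] at hq hq'
      obtain ⟨⟨⟨⟨hx, hy⟩, -⟩, hzw⟩, rfl, rfl⟩ := hq
      obtain ⟨⟨-, hzw'⟩, rfl, rfl⟩ := hq'
      have hz : z = z' := mul_left_cancel₀ (ne_of_mem_of_not_mem hx h0) heq
      subst hz
      have hw : w = w' := mul_left_cancel₀ (ne_of_mem_of_not_mem hy h0) (hzw.symm.trans hzw')
      rw [hw]
  have h := (le_card_mul_mul_mulEnergy B B).trans (Nat.mul_le_mul_left _ hE)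
  refine exists_le_of_sum_le hB ?_
  rw [sum_const, smul_eq_mul, ← mul_sum]
  calc #B * #B ^ 3 = #B ^ 2 * #B ^ 2 := by ring
    _ ≤ _ := h

lemma sum_le_mul_card_add_sum_Ioc {ι : Type*} (s : Finset ι) (w : ι → ℕ) {n : ℕ}
    (hw : ∀ a ∈ s, w a ≤ n) (T : ℕ) :
    ∑ a ∈ s, w a ≤ T * #s + ∑ t ∈ Ioc T n, #{a ∈ s | t ≤ w a} := by
  have hcomm : ∑ t ∈ Ioc T n, #{a ∈ s | t ≤ w a} = ∑ a ∈ s, #{t ∈ Ioc T n | t ≤ w a} := by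
    simp only [card_filter]
    exact sum_comm
  rw [hcomm, mul_comm, ← smul_eq_mul, ← sum_const, ← sum_add_distrib]
  refine sum_le_sum fun a ha ↦ ?_
  have : {t ∈ Ioc T n | t ≤ w a} = Ioc T (w a) := by
    ext t
    have := hw a ha
    simp only [mem_filter, mem_Ioc]
    lia
  rw [this, Nat.card_Ioc]
  lia

lemma card_pow_le_of_card_add_add_add_le {p : ℕ} [Fact p.Prime] {B : Finset (ZMod p)}
    (hBn : B.Nonempty) (h0 : 0 ∉ B) (hBp : #B ^ 2 ≤ p) {S M K : ℕ} (hS : #(B + B) ≤ S)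
    (hM : #(B * B) ≤ M) (hK : 1 ≤ K) (hB : #(B + (B + B + B)) * #B ^ 2 ≤ K * S ^ 3) :
    #B ^ 13 ≤ 27648 * K * (S ^ 8 * M ^ 4) := by
  have hm : 0 < #B := hBn.card_pos
  have hBS : #B ≤ S := (card_le_card_add_right hBn).trans hS
  have hM0 : 0 < M := (hBn.mul hBn).card_pos.trans_le hM
  obtain ⟨e, -, he⟩ := exists_card_pow_three_le_sum_card_inter hBn h0
  set w : ZMod p → ℕ := fun a ↦ #(a • B ∩ e • B) with hw
  have hwB : ∀ a ∈ B, w a ≤ #B := fun a _ ↦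
    (card_le_card inter_subset_left).trans card_smul_finset_le
  obtain hlt | hge := Nat.lt_or_ge (#B ^ 2) (2 * M)
  · calc #B ^ 13 ≤ #B ^ 16 := Nat.pow_le_pow_right hm (by norm_num)
      _ = #B ^ 8 * (#B ^ 2) ^ 4 := by ring
      _ ≤ S ^ 8 * (2 * M) ^ 4 := by gcongr
      _ = 16 * 1 * (S ^ 8 * M ^ 4) := by ring
      _ ≤ 27648 * K * (S ^ 8 * M ^ 4) := by gcongr; norm_num
  set T := #B ^ 2 / (2 * M) with hT
  have hT0 : 0 < T := Nat.div_pos hge (by lia)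
  have hT1 : T * (2 * M) ≤ #B ^ 2 := Nat.div_mul_le_self _ _
  have hT2 : #B ^ 2 ≤ 4 * M * T := by
    have := Nat.lt_mul_div_succ (#B ^ 2) (show 0 < 2 * M by lia)
    rw [← hT] at this
    nlinarith
  set V := ∑ t ∈ Ioc T #B, #{a ∈ B | t ≤ w a} with hV
  have hWV := sum_le_mul_card_add_sum_Ioc B w hwB T
  rw [← hV] at hWV
  have hmV : #B ^ 3 ≤ 2 * M * V := by
    have h1 : #B ^ 3 ≤ M * (T * #B + V) := he.trans (Nat.mul_le_mul hM hWV)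
    nlinarith [Nat.mul_le_mul_right #B hT1]
  have hVT : V ^ 3 * T * #B ^ 2 ≤ 864 * K * S ^ 8 := by
    have hm' : (0 : ℝ) < (#B : ℝ) ^ 2 := by positivity
    have h := sum_Ioc_pow_three_mul_le (f := fun t ↦ (#{a ∈ B | t ≤ w a} : ℝ))
      (Y := 32 * K * S ^ 8 / #B ^ 2) (fun t ↦ by positivity) (by positivity) (fun t ↦ by
        rw [le_div_iff₀ hm']
        exact_mod_cast card_pow_mul_pow_mul_card_sq_le (filter_subset _ B) hBp
          (fun a ha ↦ (mem_filter.1 ha).2) hS hBS hK hB) hT0 #B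
    rw [← Nat.cast_sum, ← hV, mul_div_assoc', le_div_iff₀ hm'] at h
    have h' : (V : ℝ) ^ 3 * T * #B ^ 2 ≤ 864 * K * S ^ 8 := by linarith
    exact_mod_cast h'
  calc #B ^ 13 = (#B ^ 3) ^ 3 * #B ^ 2 * #B ^ 2 := by ring
    _ ≤ (2 * M * V) ^ 3 * (4 * M * T) * #B ^ 2 := by gcongr
    _ = 32 * M ^ 4 * (V ^ 3 * T * #B ^ 2) := by ring
    _ ≤ 32 * M ^ 4 * (864 * K * S ^ 8) := by gcongr
    _ = 27648 * K * (S ^ 8 * M ^ 4) := by ring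

lemma exists_large_subset_card_add_add_add_le {G : Type*} [AddCommGroup G] [DecidableEq G]
    {A : Finset G} (hA : A.Nonempty) :
    ∃ B ⊆ A, #A ≤ 2 * #B ∧ #(B + (B + B + B)) * #B ^ 2 ≤ 8 * #(A + A) ^ 3 := by
  have hA0 : (0 : ℝ) < #A := by exact_mod_cast hA.card_pos
  obtain ⟨B, hBA, hBc, hB⟩ := exists_large_subset_card_add_nsmul_le hA
    (α := #(A + A) / #A) (div_mul_cancel₀ _ hA0.ne').ge 3
  refine ⟨B, hBA, hBc, ?_⟩
  have h3 : 3 • A = A + A + A := by simp only [succ_nsmul, zero_nsmul, zero_add]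
  rw [h3] at hB
  have h1 : (#(B + (B + B + B)) : ℝ) ≤ #(B + (A + A + A)) := by
    exact_mod_cast card_le_card (add_subset_add_left
      (add_subset_add (add_subset_add hBA hBA) hBA))
  have h2 : (#B : ℝ) ≤ #A := by exact_mod_cast card_le_card hBA
  have h : (#(B + (B + B + B)) : ℝ) * #B ^ 2 ≤ 8 * #(A + A) ^ 3 :=
    calc (#(B + (B + B + B)) : ℝ) * #B ^ 2
        ≤ (2 * (#(A + A) / #A)) ^ 3 * #B * #B ^ 2 :=
          mul_le_mul_of_nonneg_right (h1.trans hB) (by positivity)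
      _ = (2 * (#(A + A) / #A)) ^ 3 * #B ^ 3 := by ring
      _ ≤ (2 * (#(A + A) / #A)) ^ 3 * #A ^ 3 := by gcongr
      _ = 8 * #(A + A) ^ 3 := by field_simp; ring
  exact_mod_cast h

theorem key_inequality_small :
    ∃ c : ℝ, 0 < c ∧ ∀ (p : ℕ), p.Prime → ∀ A : Finset (ZMod p),
      2 ≤ A.card → (A.card : ℝ) ≤ Real.sqrt p →
      c * (A.card : ℝ) ^ 13 ≤ ((A + A).card : ℝ) ^ 8 * ((A * A).card : ℝ) ^ 4 := by
  refine ⟨(4 ^ 13 * 221184)⁻¹, by norm_num, fun p hp A hA hAp ↦ ?_⟩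
  have : Fact p.Prime := ⟨hp⟩
  have hAp' : #A ^ 2 ≤ p := by
    have h := (Real.le_sqrt (by positivity) (by positivity)).1 hAp
    exact_mod_cast h
  have herase : #A - 1 ≤ #(A.erase 0) := pred_card_le_card_erase
  have hEn : (A.erase 0).Nonempty := card_pos.1 (by lia)
  have hEA : A.erase 0 ⊆ A := erase_subset _ _
  obtain ⟨B, hBE, hBc, hB⟩ := exists_large_subset_card_add_add_add_le hEn
  have hBA : B ⊆ A := hBE.trans hEA
  have hBn : B.Nonempty := card_pos.1 (by have := hEn.card_pos; lia)
  have h := card_pow_le_of_card_add_add_add_le (S := #(A + A)) (M := #(A * A)) hBn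
    (fun h0 ↦ notMem_erase 0 A (hBE h0)) ((Nat.pow_le_pow_left (card_le_card hBA) 2).trans hAp')
    (card_le_card (add_subset_add hBA hBA)) (card_le_card (mul_subset_mul hBA hBA))
    (by norm_num : 1 ≤ 8) (hB.trans (by gcongr))
  have hcard : #A ≤ 4 * #B := by have := hBn.card_pos; lia
  rw [inv_mul_le_iff₀ (by norm_num)]
  have hfin : #A ^ 13 ≤ 4 ^ 13 * 221184 * (#(A + A) ^ 8 * #(A * A) ^ 4) :=
    calc #A ^ 13 ≤ (4 * #B) ^ 13 := by gcongr
      _ = 4 ^ 13 * #B ^ 13 := by rw [mul_pow]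
      _ ≤ 4 ^ 13 * (27648 * 8 * (#(A + A) ^ 8 * #(A * A) ^ 4)) := by gcongr
      _ = _ := by ring
  exact_mod_cast hfin
end
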